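/- arXiv:2304.03380 — 3 statements merged into one kernel-verified Lean document; each statement's English description precedes it below -/
import Mathlib

section
/- Let M_1, …, M_k = 𝒱 be a non-decreasing complete sequence of marginals, and fix i with D := M_i ∖ ∪_{j<i} M_j ≠ ∅; set S := M_i ∩ (∪_{j<i} M_j). If P and Q are strictly positive distributions on ∏_{V∈𝒱} X_V such that λ^{M_i}_E(P)(e) = λ^{M_i}_E(Q)(e) for every effect E ⊆ M_i with M(E) = M_i and every cell e, then the conditional distributions of the variables D given the variables S computed from the M_i-marginals of P and of Q coincide: P_{M_i}(d | s) = Q_{M_i}(d | s) for all cells d of D and s of S. -/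
/-!
Write `D = M i \ ⋃_{j<i} M j` and `S = M i ∩ ⋃_{j<i} M j`. The recursive definition of the
log-linear parameters, taken at the full effect `E = M i`, is the log-linear expansion
`log P_M(m) = ∑_{F ⊆ M} λ^M_F(m|_F)` (`log_marginal_eq_sum`). An effect `F ⊆ M i` that is not
assigned to `M i` lies in an earlier marginal, hence in `S`. So if `P` and `Q` share the
parameters assigned to `M i`, then `log P_M(m) - log Q_M(m)` depends on `m` only through `m|_S`,
i.e. the ratio `P_M / Q_M` is constant on each fibre of `m ↦ m|_S`. Summing over such a fibre
(`marginal_eq_sum_marginal`) shows that `P_S / Q_S` takes that same value there, and the constant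
cancels in the conditional distributions.
-/

open Finset

abbrev Cell {V : Type} (X : V → Type) (E : Finset V) : Type := (w : {x // x ∈ E}) → X w.1

def restrictCell {V : Type} {X : V → Type} {E F : Finset V} (h : F ⊆ E) (e : Cell X E) :
    Cell X F := fun w => e ⟨w.1, h w.2⟩

variable {V : Type} [Fintype V] [DecidableEq V]

/-- The marginal of `P` on the subset `M` of variables. -/
noncomputable def marginal (X : V → Type) [∀ v, Fintype (X v)] [∀ v, DecidableEq (X v)]
    (P : (∀ v, X v) → ℝ) (M : Finset V) (m : Cell X M) : ℝ :=
  ∑ v : (∀ v, X v), if ∀ w : {x // x ∈ M}, v w.1 = m w then P v else 0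

/-- The log-linear parameter of effect `E` computed in the marginal `M`. -/
noncomputable def mllp (X : V → Type) [∀ v, Fintype (X v)] [∀ v, DecidableEq (X v)]
    (P : (∀ v, X v) → ℝ) (M : Finset V) (E : Finset V) (e : Cell X E) : ℝ :=
  (Fintype.card (Cell X (M \ E)) : ℝ)⁻¹ *
    ∑ m : Cell X M,
      (if ∀ (w : V) (hE : w ∈ E) (hM : w ∈ M), m ⟨w, hM⟩ = e ⟨w, hE⟩
       then Real.log (marginal X P M m) else 0)
  - ∑ F ∈ (E.powerset.erase E).attach,
      mllp X P M F.1 (fun w => e ⟨w.1, Finset.mem_powerset.mp (Finset.mem_of_mem_erase F.2) w.2⟩)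
termination_by E.card
decreasing_by
  have h := F.2
  rw [Finset.mem_erase, Finset.mem_powerset] at h
  exact Finset.card_lt_card (HasSubset.Subset.ssubset_of_ne h.2 h.1)

theorem marginal_pos (X : V → Type) [∀ v, Fintype (X v)] [∀ v, DecidableEq (X v)]
    (hX : ∀ v, 2 ≤ Fintype.card (X v)) (P : (∀ v, X v) → ℝ) (hP : ∀ v, 0 < P v)
    (M : Finset V) (m : Cell X M) : 0 < marginal X P M m := by
  have hne : ∀ v, Nonempty (X v) := fun v =>
    Fintype.card_pos_iff.mp (lt_of_lt_of_le two_pos (hX v))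
  let d : ∀ v, X v := fun v => Classical.choice (hne v)
  unfold marginal
  refine Finset.sum_pos' ?_ ⟨fun v => if h : v ∈ M then m ⟨v, h⟩ else d v, Finset.mem_univ _, ?_⟩
  · intro v _
    split_ifs
    · exact (hP v).le
    · exact le_rfl
  · rw [if_pos]
    · exact hP _
    · rintro ⟨w, hw⟩
      simp [hw]

theorem marginal_eq_sum_marginal (X : V → Type) [∀ v, Fintype (X v)] [∀ v, DecidableEq (X v)]
    (P : (∀ v, X v) → ℝ) {M S : Finset V} (h : S ⊆ M) (s : Cell X S) :
    marginal X P S s =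
      ∑ m : Cell X M, if restrictCell h m = s then marginal X P M m else 0 := by
  unfold marginal
  have hcomm : (∑ m : Cell X M, if restrictCell h m = s then
        ∑ v : (∀ v, X v), (if ∀ w : {x // x ∈ M}, v w.1 = m w then P v else 0) else 0) =
      ∑ v : (∀ v, X v), ∑ m : Cell X M, if restrictCell h m = s then
        (if ∀ w : {x // x ∈ M}, v w.1 = m w then P v else 0) else 0 := by
    rw [Finset.sum_comm]
    refine Finset.sum_congr rfl fun m _ => ?_
    split_ifs <;> simp
  rw [hcomm]
  refine Finset.sum_congr rfl fun v _ => ?_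
  -- Only the restriction of `v` to `M` contributes to the inner sum.
  rw [Finset.sum_eq_single (fun w : {x // x ∈ M} => v w.1)]
  · simp only [implies_true, if_true]
    refine if_congr ?_ rfl rfl
    exact ⟨fun hv => funext hv, fun hv w => congrFun hv w⟩
  · intro m _ hm
    have : ¬ ∀ w : {x // x ∈ M}, v w.1 = m w := fun hv => hm (funext fun w => (hv w).symm)
    rw [if_neg this, ite_self]
  · simp

/-- The log-linear expansion of `log P_M`: the defining recursion of the parameters at the full
effect `E = M`, where the average runs over a single cell. -/
theorem log_marginal_eq_sum (X : V → Type) [∀ v, Fintype (X v)] [∀ v, DecidableEq (X v)]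
    (P : (∀ v, X v) → ℝ) (M : Finset V) (m : Cell X M) :
    Real.log (marginal X P M m) =
      ∑ F ∈ M.powerset.attach,
        mllp X P M F.1 (restrictCell (Finset.mem_powerset.mp F.2) m) := by
  -- Total in `F`, so that sums over different attached finsets can be compared.
  let f : Finset V → ℝ := fun F => if h : F ⊆ M then mllp X P M F (restrictCell h m) else 0
  have h1 : ∑ F ∈ M.powerset.attach,
      mllp X P M F.1 (restrictCell (Finset.mem_powerset.mp F.2) m) = ∑ F ∈ M.powerset, f F := by
    rw [← Finset.sum_attach M.powerset f]
    refine Finset.sum_congr rfl fun F _ => ?_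
    simp only [f, dif_pos (Finset.mem_powerset.mp F.2)]
  have h2 : ∑ F ∈ (M.powerset.erase M).attach,
      mllp X P M F.1
        (fun w => m ⟨w.1, Finset.mem_powerset.mp (Finset.mem_of_mem_erase F.2) w.2⟩) =
      ∑ F ∈ M.powerset.erase M, f F := by
    rw [← Finset.sum_attach (M.powerset.erase M) f]
    refine Finset.sum_congr rfl fun F _ => ?_
    simp only [f, dif_pos (Finset.mem_powerset.mp (Finset.mem_of_mem_erase F.2))]
    rfl
  have hM : f M = mllp X P M M m := by
    simp only [f, dif_pos (Finset.Subset.refl M)]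
    rfl
  have hcard : Fintype.card (Cell X (M \ M)) = 1 := by
    have : IsEmpty {x // x ∈ M \ M} := ⟨fun x => by simpa using x.2⟩
    exact Fintype.card_unique
  have hsum : (∑ m' : Cell X M,
      (if ∀ (w : V) (hE : w ∈ M) (hM : w ∈ M), m' ⟨w, hM⟩ = m ⟨w, hE⟩
       then Real.log (marginal X P M m') else 0)) = Real.log (marginal X P M m) := by
    rw [Finset.sum_eq_single m]
    · simp
    · intro m' _ hne
      rw [if_neg]
      exact fun h => hne (funext fun w => h w.1 w.2 w.2)
    · simp
  rw [h1, ← Finset.add_sum_erase _ f (Finset.mem_powerset_self M), hM, mllp, h2, hsum, hcard]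
  simp

/-- For a non-decreasing complete sequence of marginals, if the marginal
log-linear parameters of effects whose first containing marginal is `M i` agree for two
strictly positive distributions `P` and `Q`, and `D = M i ∖ ⋃_{j<i} M j` is nonempty, then
the conditional distributions of the variables `D` given `S = M i ∩ ⋃_{j<i} M j`, computed
from the `M i`-marginals of `P` and of `Q`, coincide. -/
theorem mllp_determines_conditional
    {V : Type} [Fintype V] [DecidableEq V]
    (X : V → Type) [∀ v, Fintype (X v)] [∀ v, DecidableEq (X v)]
    (hX : ∀ v, 2 ≤ Fintype.card (X v))
    (k : ℕ) (M : Fin (k + 1) → Finset V)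
    (hnd : ∀ i j : Fin (k + 1), i < j → ¬ M j ⊆ M i)
    (hcomp : M (Fin.last k) = Finset.univ)
    (idx : Finset V → Fin (k + 1))
    (hidx : ∀ E : Finset V, E ⊆ M (idx E) ∧ ∀ j : Fin (k + 1), j < idx E → ¬ E ⊆ M j)
    (i : Fin (k + 1))
    (hD : (M i \ (Finset.univ.filter (fun j => j < i)).biUnion M).Nonempty)
    (P Q : (∀ v, X v) → ℝ)
    (hPpos : ∀ v, 0 < P v) (hPsum : ∑ v, P v = 1)
    (hQpos : ∀ v, 0 < Q v) (hQsum : ∑ v, Q v = 1)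
    (hparam : ∀ (E : Finset V) (e : Cell X E), E ⊆ M i → idx E = i →
      mllp X P (M i) E e = mllp X Q (M i) E e) :
    ∀ m : Cell X (M i),
      marginal X P (M i) m /
          marginal X P (M i ∩ (Finset.univ.filter (fun j => j < i)).biUnion M)
            (restrictCell Finset.inter_subset_left m) =
        marginal X Q (M i) m /
          marginal X Q (M i ∩ (Finset.univ.filter (fun j => j < i)).biUnion M)
            (restrictCell Finset.inter_subset_left m) := by
  intro m
  set S := M i ∩ (Finset.univ.filter (fun j => j < i)).biUnion M with hS
  have hsub : S ⊆ M i := Finset.inter_subset_left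
  -- Effects inside `M i` are assigned to `M i` unless they lie in `S`.
  have heff : ∀ F ⊆ M i, idx F = i ∨ F ⊆ S := by
    intro F hF
    rcases lt_trichotomy (idx F) i with h | h | h
    · refine Or.inr fun w hw => Finset.mem_inter.mpr ⟨hF hw, ?_⟩
      exact Finset.mem_biUnion.mpr ⟨idx F, by simpa using h, (hidx F).1 hw⟩
    · exact Or.inl h
    · exact absurd hF ((hidx F).2 i h)
  have hlog : ∀ m' : Cell X (M i), restrictCell hsub m' = restrictCell hsub m →
      Real.log (marginal X P (M i) m') - Real.log (marginal X Q (M i) m') =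
        Real.log (marginal X P (M i) m) - Real.log (marginal X Q (M i) m) := by
    intro m' hm'
    simp only [log_marginal_eq_sum, ← Finset.sum_sub_distrib]
    refine Finset.sum_congr rfl fun F _ => ?_
    have hF := Finset.mem_powerset.mp F.2
    rcases heff F.1 hF with h | h
    · rw [hparam _ _ hF h, hparam _ _ hF h, sub_self, sub_self]
    · have : restrictCell hF m' = restrictCell hF m :=
        funext fun w => congrFun hm' ⟨w.1, h w.2⟩
      rw [this]
  have posP := marginal_pos X hX P hPpos
  have posQ := marginal_pos X hX Q hQpos
  have hratio : ∀ m' : Cell X (M i), restrictCell hsub m' = restrictCell hsub m →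
      marginal X P (M i) m' =
        marginal X P (M i) m / marginal X Q (M i) m * marginal X Q (M i) m' := by
    intro m' hm'
    have h := hlog m' hm'
    rw [← Real.log_div (posP _ _).ne' (posQ _ _).ne',
      ← Real.log_div (posP _ _).ne' (posQ _ _).ne'] at h
    have h' := Real.log_injOn_pos (div_pos (posP _ _) (posQ _ _))
      (div_pos (posP _ _) (posQ _ _)) h
    rw [← h', div_mul_cancel₀ _ (posQ _ _).ne']
  have hSratio : marginal X P S (restrictCell hsub m) =
      marginal X P (M i) m / marginal X Q (M i) m * marginal X Q S (restrictCell hsub m) := by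
    rw [marginal_eq_sum_marginal X P hsub, marginal_eq_sum_marginal X Q hsub, Finset.mul_sum]
    refine Finset.sum_congr rfl fun m' _ => ?_
    split_ifs with h
    · exact hratio m' h
    · simp
  have h1 := (posP _ m).ne'
  have h2 := (posQ _ m).ne'
  have h3 := (posQ S (restrictCell hsub m)).ne'
  change marginal X P (M i) m / marginal X P S (restrictCell hsub m) =
    marginal X Q (M i) m / marginal X Q S (restrictCell hsub m)
  rw [hSratio]
  field_simp
end

section
/- The non-redundant components of the hierarchical complete marginal log-linear parameterization based on a non-decreasing complete sequence of marginals M_1, …, M_k = 𝒱 are variation independent (i.e. the range over all strictly positive distributions of the vector of all non-redundant components equals the Cartesian product of the ranges of the individual components) if and only if the sequence is ordered decomposable, meaning: either k ≤ 2, or for every j = 3, …, k the maximal elements (with respect to inclusion) of {M_1, …, M_j} can be listed as H_1, …, H_l such that either l ≤ 2 or for every 3 ≤ h ≤ l there exists 1 ≤ g ≤ h−1 with (H_1 ∪ … ∪ H_{h−1}) ∩ H_h = H_g ∩ H_h. -/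
/-!
Identify functions of a marginal cell with functions of the full cell, so that marginalisation to
`M` becomes, up to a constant factor, the averaging operator `avg X M`, and the log-linear
parameters of effect `E` become the pure `E`-interaction of the logarithm of the marginal
(`mllp_eq_interaction`). A pure interaction is determined by, and can be freely prescribed on, the
cells without baseline coordinates (`pure_eq_zero`, `exists_pure`). For one marginal table, the
margins on a down-set of effects together with the interactions of the remaining effects form a
mixed parameterization: they determine the table (`mixed_unique`, by monotonicity of the logarithm)
and can be combined freely (`mixed_exists`, by minimising a coercive convex function). In
particular each single component takes all real values.

Ordered decomposability is sufficient: add the marginals one at a time. The mixed parameterization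
yields a table on `M j` that agrees with the previous distribution on all intersections with earlier
marginals and has the prescribed new parameters. Tables on the maximal marginals that agree on
pairwise intersections are glued along the running intersection ordering by conditionally
independent products (`glue_sequence`), see `exists_extension`.

Ordered decomposability is necessary: suppose that signed moments `c` give positive tables on each of
`M 0, …, M j`, but violate a linear inequality satisfied by every distribution. The signed table
with moments `c` (`momentTable`) has well-defined parameters on these marginals. By variation
independence they belong to a distribution, whose marginals then agree with those of the signed
table, a contradiction. So variation independence implies `NoObstruction`. Explicit moments that
are parity constraints on the boundary of a simplex, or on a chordless cycle (in a form with one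
side of the cycle replaced by a connected set), show that an unobstructed family is a conformal
hypergraph with chordal graph (`conformal`, `no_cycle`). Dirac's argument produces simplicial
vertices (`exists_simplicial_pair`), and eliminating them one at a time orders the maximal members
of the family with the running intersection property (`exists_running_intersection`).
-/


open Finset

variable {V : Type} [Fintype V] [DecidableEq V]

/-- The maximal elements (with respect to inclusion) of the family `{M i : i ≤ j}`. -/
def maxMarginals {V : Type} [Fintype V] [DecidableEq V] {k : ℕ}
    (M : Fin (k + 1) → Finset V) (j : Fin (k + 1)) : Finset (Finset V) :=
  ((Finset.univ.filter (fun i => i ≤ j)).image M).filter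
    (fun A => ∀ B ∈ (Finset.univ.filter (fun i => i ≤ j)).image M, A ⊆ B → A = B)

/-- Ordered decomposability of a sequence of marginals: either the sequence has at most two
members, or for every prefix of length at least three, the maximal elements of the prefix can be
listed as `H 0, …, H (l-1)` such that either `l ≤ 2` or every `H h` with `h ≥ 2` (the third
element onwards) intersects the union of its predecessors in `H g ∩ H h` for some earlier
`g < h`. -/
def OrderedDecomposable {V : Type} [Fintype V] [DecidableEq V] {k : ℕ}
    (M : Fin (k + 1) → Finset V) : Prop :=
  k + 1 ≤ 2 ∨
    ∀ j : Fin (k + 1), 2 ≤ j.1 →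
      ∃ (l : ℕ) (H : Fin l → Finset V),
        Function.Injective H ∧
        (∀ A : Finset V, A ∈ maxMarginals M j ↔ ∃ h : Fin l, H h = A) ∧
        (l ≤ 2 ∨
          ∀ h : Fin l, 2 ≤ h.1 →
            ∃ g : Fin l, g < h ∧
              ((Finset.univ.filter (fun g' => g' < h)).biUnion H) ∩ H h = H g ∩ H h)

set_option linter.unusedSectionVars false

/-! ### Averages over the coordinates outside a set -/

section Averages

variable {X : V → Type} [∀ v, Fintype (X v)] [∀ v, DecidableEq (X v)]

/-- `(y, z) ↦ (E.piecewise y z, E.piecewise z y)` is an involution, so sums are invariant. -/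
theorem sum_piecewise_swap (E : Finset V) (h : (∀ v, X v) → (∀ v, X v) → ℝ) :
    ∑ y, ∑ z, h (E.piecewise y z) (E.piecewise z y) = ∑ y, ∑ z, h y z := by
  have hinv : Function.Involutive
      (fun p : (∀ v, X v) × (∀ v, X v) => (E.piecewise p.1 p.2, E.piecewise p.2 p.1)) := by
    rintro ⟨y, z⟩
    ext v <;> by_cases hv : v ∈ E <;> simp [hv]
  rw [← Fintype.sum_prod_type', ← Fintype.sum_prod_type']
  exact Equiv.sum_comp hinv.toPerm (fun p => h p.1 p.2)

/-- The average of a function over all coordinates outside `E`, again as a function of the full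
cell. It is the conditional expectation given the coordinates in `E` under the uniform
distribution. -/
noncomputable def avg (X : V → Type) [∀ v, Fintype (X v)] (E : Finset V) :
    ((∀ v, X v) → ℝ) →ₗ[ℝ] ((∀ v, X v) → ℝ) where
  toFun φ x := (Fintype.card (∀ v, X v) : ℝ)⁻¹ * ∑ y, φ (E.piecewise x y)
  map_add' φ ψ := by
    ext x
    simp [Finset.sum_add_distrib, mul_add]
  map_smul' c φ := by
    ext x
    simp only [Pi.smul_apply, smul_eq_mul, RingHom.id_apply, ← Finset.mul_sum]
    ring

theorem avg_apply (E : Finset V) (φ : (∀ v, X v) → ℝ) (x : ∀ v, X v) :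
    avg X E φ x = (Fintype.card (∀ v, X v) : ℝ)⁻¹ * ∑ y, φ (E.piecewise x y) := rfl

variable [∀ v, Nonempty (X v)]

theorem card_omega_ne : (Fintype.card (∀ v, X v) : ℝ) ≠ 0 := by
  exact_mod_cast Fintype.card_ne_zero

theorem avg_avg (E F : Finset V) (φ : (∀ v, X v) → ℝ) :
    avg X E (avg X F φ) = avg X (E ∩ F) φ := by
  ext x
  have key : ∀ y z : ∀ v, X v, F.piecewise (E.piecewise x y) z
      = (E ∩ F).piecewise x (F.piecewise y z) := by
    intro y z
    ext v
    by_cases h1 : v ∈ E <;> by_cases h2 : v ∈ F <;> simp [h1, h2]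
  simp only [avg_apply, key, ← Finset.mul_sum]
  rw [sum_piecewise_swap F (fun w _ => φ ((E ∩ F).piecewise x w))]
  simp only [Finset.sum_const, Finset.card_univ, nsmul_eq_mul, ← Finset.mul_sum]
  have := card_omega_ne (X := X)
  field_simp

theorem avg_avg_of_subset {E F : Finset V} (h : E ⊆ F) (φ : (∀ v, X v) → ℝ) :
    avg X E (avg X F φ) = avg X E φ := by
  rw [avg_avg, Finset.inter_eq_left.mpr h]

theorem avg_avg_of_subset' {E F : Finset V} (h : E ⊆ F) (φ : (∀ v, X v) → ℝ) :
    avg X F (avg X E φ) = avg X E φ := by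
  rw [avg_avg, Finset.inter_eq_right.mpr h]

theorem avg_selfAdjoint (E : Finset V) (φ ψ : (∀ v, X v) → ℝ) :
    ∑ x, φ x * avg X E ψ x = ∑ x, avg X E φ x * ψ x := by
  have h := sum_piecewise_swap E (fun x y => φ x * ψ (E.piecewise x y))
  have key : ∀ y z : ∀ v, X v, E.piecewise (E.piecewise y z) (E.piecewise z y) = y := by
    intro y z
    ext v
    by_cases h1 : v ∈ E <;> simp [h1]
  simp only [key] at h
  simp only [avg_apply]
  have e1 : ∀ x, φ x * ((Fintype.card (∀ v, X v) : ℝ)⁻¹ * ∑ y, ψ (E.piecewise x y))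
      = (Fintype.card (∀ v, X v) : ℝ)⁻¹ * ∑ y, φ x * ψ (E.piecewise x y) := by
    intro x
    rw [← Finset.mul_sum]
    ring
  have e2 : ∀ x, ((Fintype.card (∀ v, X v) : ℝ)⁻¹ * ∑ y, φ (E.piecewise x y)) * ψ x
      = (Fintype.card (∀ v, X v) : ℝ)⁻¹ * ∑ y, φ (E.piecewise x y) * ψ x := by
    intro x
    rw [← Finset.sum_mul]
    ring
  simp only [e1, e2, ← Finset.mul_sum, h]

theorem avg_piecewise (E : Finset V) (φ : (∀ v, X v) → ℝ) (x y : ∀ v, X v) :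
    avg X E φ (E.piecewise x y) = avg X E φ x := by
  simp [avg_apply]

theorem avg_eq_self {E : Finset V} {φ : (∀ v, X v) → ℝ}
    (h : ∀ x y, φ (E.piecewise x y) = φ x) : avg X E φ = φ := by
  ext x
  simp only [avg_apply, h, Finset.sum_const, Finset.card_univ, nsmul_eq_mul]
  have := card_omega_ne (X := X)
  field_simp

theorem piecewise_of_avg_eq_self {E : Finset V} {φ : (∀ v, X v) → ℝ}
    (h : avg X E φ = φ) (x y : ∀ v, X v) : φ (E.piecewise x y) = φ x := by
  rw [← h, avg_piecewise]

theorem avg_mul_left {E : Finset V} {φ : (∀ v, X v) → ℝ} (h : avg X E φ = φ)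
    (ψ : (∀ v, X v) → ℝ) : avg X E (φ * ψ) = φ * avg X E ψ := by
  ext x
  simp only [avg_apply, Pi.mul_apply, piecewise_of_avg_eq_self h, ← Finset.mul_sum]
  ring

theorem avg_comp {E : Finset V} {φ : (∀ v, X v) → ℝ} (h : avg X E φ = φ) (f : ℝ → ℝ) :
    avg X E (fun x => f (φ x)) = fun x => f (φ x) :=
  avg_eq_self fun x y => by rw [piecewise_of_avg_eq_self h]

theorem avg_pos (E : Finset V) {φ : (∀ v, X v) → ℝ} (h : ∀ x, 0 < φ x) (x : ∀ v, X v) :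
    0 < avg X E φ x := by
  rw [avg_apply]
  have := Fintype.card_pos (α := ∀ v, X v)
  have : 0 < ∑ y, φ (E.piecewise x y) := Finset.sum_pos (fun y _ => h _) Finset.univ_nonempty
  positivity

theorem avg_const (E : Finset V) (c : ℝ) : avg X E (fun _ => c) = fun _ => c :=
  avg_eq_self fun _ _ => rfl

theorem avg_univ (φ : (∀ v, X v) → ℝ) : avg X Finset.univ φ = φ :=
  avg_eq_self fun x y => by simp

theorem avg_empty (φ : (∀ v, X v) → ℝ) (x : ∀ v, X v) :
    avg X ∅ φ x = (Fintype.card (∀ v, X v) : ℝ)⁻¹ * ∑ y, φ y := by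
  simp [avg_apply]

theorem sum_avg (E : Finset V) (φ : (∀ v, X v) → ℝ) : ∑ x, avg X E φ x = ∑ x, φ x := by
  have := avg_selfAdjoint E (fun _ => 1) φ
  simpa [avg_const] using this

theorem avg_compl_singleton (v : V) (φ : (∀ v, X v) → ℝ) (x : ∀ v, X v) :
    avg X ({v}ᶜ) φ x = (Fintype.card (∀ v, X v) : ℝ)⁻¹ *
      ((∑ s, φ (Function.update x v s)) * ∏ w ∈ Finset.univ.erase v, (Fintype.card (X w) : ℝ)) := by
  rw [avg_apply]
  congr 1
  have h1 : ∀ y : ∀ v, X v, ({v}ᶜ : Finset V).piecewise x y = Function.update x v (y v) := by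
    intro y
    ext w
    by_cases hw : w = v
    · subst hw; simp
    · simp [hw]
  have h2 := Finset.prod_univ_sum (fun w => (Finset.univ : Finset (X w)))
    (fun w s => if w = v then φ (Function.update x w s) else 1)
  rw [Fintype.piFinset_univ] at h2
  have h3 : ∀ y : ∀ v, X v, (∏ w, if w = v then φ (Function.update x w (y w)) else 1)
      = φ (Function.update x v (y v)) := by
    intro y
    rw [Finset.prod_ite_eq_of_mem' _ _ _ (Finset.mem_univ v)]
  simp only [h3] at h2
  simp only [h1]
  rw [← h2, ← Finset.mul_prod_erase _ _ (Finset.mem_univ v)]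
  congr 1
  · simp
  · refine Finset.prod_congr rfl fun w hw => ?_
    simp [Finset.ne_of_mem_erase hw]

theorem avg_eq_zero {G : Finset V} {v : V} (hv : v ∉ G) {φ : (∀ v, X v) → ℝ}
    (h : ∀ x, ∑ s, φ (Function.update x v s) = 0) : avg X G φ = 0 := by
  have h0 : avg X ({v}ᶜ) φ = 0 := by
    ext x
    simp [avg_compl_singleton, h]
  have hG : G ⊆ {v}ᶜ := by
    intro w hw
    simp only [Finset.mem_compl, Finset.mem_singleton]
    rintro rfl
    exact hv hw
  rw [← avg_avg_of_subset hG, h0, map_zero]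

theorem sum_update_eq_zero {v : V} {φ : (∀ v, X v) → ℝ} (h : avg X ({v}ᶜ) φ = 0)
    (x : ∀ v, X v) : ∑ s, φ (Function.update x v s) = 0 := by
  have h1 := congrFun h x
  rw [avg_compl_singleton] at h1
  have h2 : ∏ w ∈ Finset.univ.erase v, (Fintype.card (X w) : ℝ) ≠ 0 :=
    Finset.prod_ne_zero_iff.mpr fun w _ => by exact_mod_cast Fintype.card_ne_zero
  have h3 := inv_ne_zero (card_omega_ne (X := X))
  exact (mul_eq_zero.mp ((mul_eq_zero.mp h1).resolve_left h3)).resolve_right h2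

/-! ### Interactions -/

/-- The interaction of effect `E` of a function on the full table: the component of the
averages that is new at `E`. -/
noncomputable def interaction (X : V → Type) [∀ v, Fintype (X v)] (E : Finset V) :
    ((∀ v, X v) → ℝ) →ₗ[ℝ] ((∀ v, X v) → ℝ) :=
  avg X E - ∑ F ∈ E.ssubsets.attach, interaction X F.1
termination_by E.card
decreasing_by exact Finset.card_lt_card (Finset.mem_ssubsets.mp F.2)

theorem interaction_eq (E : Finset V) (φ : (∀ v, X v) → ℝ) :
    interaction X E φ = avg X E φ - ∑ F ∈ E.ssubsets, interaction X F φ := by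
  conv_lhs => rw [interaction]
  rw [LinearMap.sub_apply, LinearMap.sum_apply, Finset.sum_attach _ (fun F => interaction X F φ)]

theorem sum_interaction (E : Finset V) (φ : (∀ v, X v) → ℝ) :
    ∑ F ∈ E.powerset, interaction X F φ = avg X E φ := by
  have h : E ∈ E.powerset := by simp
  rw [← Finset.add_sum_erase _ _ h, interaction_eq]
  exact sub_add_cancel _ _

theorem ssubsets_filter_of_not_subset {E G : Finset V} (h : ¬ E ⊆ G) :
    E.ssubsets.filter (· ⊆ G) = (E ∩ G).powerset := by
  ext F
  simp only [Finset.mem_filter, Finset.mem_ssubsets, Finset.mem_powerset]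
  constructor
  · rintro ⟨h1, h2⟩
    exact Finset.subset_inter h1.1 h2
  · intro h1
    have h2 := h1.trans Finset.inter_subset_right
    exact ⟨⟨h1.trans Finset.inter_subset_left, fun h3 => h (h3.trans h2)⟩, h2⟩

theorem interaction_avg (E G : Finset V) (φ : (∀ v, X v) → ℝ) :
    interaction X E (avg X G φ) = if E ⊆ G then interaction X E φ else 0 := by
  induction E using Finset.strongInduction with
  | H E ih =>
    rw [interaction_eq, avg_avg]
    have h1 : ∑ F ∈ E.ssubsets, interaction X F (avg X G φ)
        = ∑ F ∈ E.ssubsets.filter (· ⊆ G), interaction X F φ := by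
      rw [Finset.sum_filter]
      exact Finset.sum_congr rfl fun F hF => ih F (Finset.mem_ssubsets.mp hF)
    rw [h1]
    split_ifs with h
    · rw [Finset.inter_eq_left.mpr h, Finset.filter_true_of_mem, ← interaction_eq]
      exact fun F hF => (Finset.mem_ssubsets.mp hF).1.trans h
    · rw [ssubsets_filter_of_not_subset h, sum_interaction, sub_self]

theorem avg_interaction (E G : Finset V) (φ : (∀ v, X v) → ℝ) :
    avg X G (interaction X E φ) = if E ⊆ G then interaction X E φ else 0 := by
  induction E using Finset.strongInduction with
  | H E ih =>
    rw [interaction_eq, map_sub, map_sum, avg_avg, Finset.inter_comm]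
    have h1 : ∑ F ∈ E.ssubsets, avg X G (interaction X F φ)
        = ∑ F ∈ E.ssubsets.filter (· ⊆ G), interaction X F φ := by
      rw [Finset.sum_filter]
      exact Finset.sum_congr rfl fun F hF => ih F (Finset.mem_ssubsets.mp hF)
    rw [h1]
    split_ifs with h
    · rw [Finset.inter_eq_left.mpr h, Finset.filter_true_of_mem]
      exact fun F hF => (Finset.mem_ssubsets.mp hF).1.trans h
    · rw [ssubsets_filter_of_not_subset h, sum_interaction, sub_self]

/-- A function of the coordinates in `E` all of whose one-coordinate sums vanish. -/
def IsPure (X : V → Type) [∀ v, Fintype (X v)] (E : Finset V) (g : (∀ v, X v) → ℝ) : Prop :=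
  ∀ G : Finset V, avg X G g = if E ⊆ G then g else 0

/-- Decompositions into pure functions are unique. -/
theorem interaction_sum_pure {g : Finset V → (∀ v, X v) → ℝ} (hg : ∀ E, IsPure X E (g E))
    (s : Finset (Finset V)) (E : Finset V) :
    interaction X E (∑ F ∈ s, g F) = if E ∈ s then g E else 0 := by
  induction E using Finset.strongInduction with
  | H E ih =>
    have h1 : avg X E (∑ F ∈ s, g F) = ∑ F ∈ E.powerset, if F ∈ s then g F else 0 := by
      rw [map_sum, ← Finset.sum_filter]
      simp only [hg _ E]
      rw [← Finset.sum_filter]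
      refine Finset.sum_congr ?_ fun _ _ => rfl
      ext F
      simp [and_comm]
    have h : E ∈ E.powerset := by simp
    rw [interaction_eq, h1, ← Finset.add_sum_erase _ _ h,
      Finset.sum_congr rfl fun F hF => ih F (Finset.mem_ssubsets.mp hF)]
    exact add_sub_cancel_right _ _

theorem interaction_const {E : Finset V} (hE : E.Nonempty) (c : ℝ) :
    interaction X E (fun _ => c) = 0 := by
  have h := interaction_avg E ∅ (fun _ : (∀ v, X v) => c)
  rw [avg_const, if_neg] at h
  · exact h
  · rw [Finset.subset_empty]
    exact hE.ne_empty

/-- A pure function is determined by its values at the cells without baseline coordinates. -/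
theorem pure_eq_zero {E : Finset V} {g : (∀ v, X v) → ℝ} (hg : IsPure X E g)
    (one : ∀ v, X v) (h : ∀ x, (∀ v ∈ E, x v ≠ one v) → g x = 0) : g = 0 := by
  have key : ∀ (n : ℕ) (x : ∀ v, X v), (E.filter fun v => x v = one v).card = n → g x = 0 := by
    intro n
    induction n using Nat.strong_induction_on with
    | _ n ih =>
      intro x hx
      by_cases h0 : ∀ v ∈ E, x v ≠ one v
      · exact h x h0
      push Not at h0
      obtain ⟨v, hv, hxv⟩ := h0
      have hz : avg X ({v}ᶜ) g = 0 := by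
        rw [hg, if_neg]
        intro hs
        simpa using hs hv
      have hs := sum_update_eq_zero hz x
      rw [← Finset.add_sum_erase _ _ (Finset.mem_univ (one v))] at hs
      rw [Finset.sum_eq_zero, add_zero, ← hxv, Function.update_eq_self] at hs
      · exact hs
      · intro s hs'
        refine ih _ ?_ (Function.update x v s) rfl
        rw [← hx]
        refine Finset.card_lt_card ⟨?_, ?_⟩
        · intro w hw
          simp only [Finset.mem_filter] at hw ⊢
          refine ⟨hw.1, ?_⟩
          by_cases hwv : w = v
          · subst hwv; exact hxv
          · simpa [hwv] using hw.2
        · intro hsub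
          have := hsub (Finset.mem_filter.mpr ⟨hv, hxv⟩)
          simp only [Finset.mem_filter, Function.update_self] at this
          exact (Finset.ne_of_mem_erase hs') this.2
  ext x
  exact key _ x rfl

/-- Arbitrary values at the cells without baseline coordinates extend to a pure function. -/
theorem exists_pure (E : Finset V) (one : ∀ v, X v) (f : (∀ v, X v) → ℝ)
    (hf : ∀ x y, f (E.piecewise x y) = f x) :
    ∃ g, IsPure X E g ∧ ∀ x, (∀ v ∈ E, x v ≠ one v) → g x = f x := by
  -- `b v t` is the indicator of `t` minus that of the baseline: it sums to zero
  let b : ∀ v, X v → X v → ℝ := fun v t s => (if s = t then 1 else 0) - if s = one v then 1 else 0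
  let Y : Finset (∀ v, X v) :=
    Finset.univ.filter fun y => (∀ v ∈ E, y v ≠ one v) ∧ ∀ v, v ∉ E → y v = one v
  let g : (∀ v, X v) → ℝ := fun x => ∑ y ∈ Y, f y * ∏ v ∈ E, b v (y v) (x v)
  refine ⟨g, ?_, ?_⟩
  · intro G
    split_ifs with hEG
    · refine avg_eq_self fun x y => ?_
      refine Finset.sum_congr rfl fun z _ => ?_
      congr 1
      refine Finset.prod_congr rfl fun v hv => ?_
      simp [hEG hv]
    · obtain ⟨v, hvE, hvG⟩ := Finset.not_subset.mp hEG
      refine avg_eq_zero hvG fun x => ?_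
      simp only [g]
      rw [Finset.sum_comm]
      refine Finset.sum_eq_zero fun y _ => ?_
      rw [← Finset.mul_sum]
      have h1 : ∀ s, ∏ w ∈ E, b w (y w) (Function.update x v s w)
          = b v (y v) s * ∏ w ∈ E.erase v, b w (y w) (x w) := by
        intro s
        rw [← Finset.mul_prod_erase _ _ hvE, Function.update_self]
        congr 1
        refine Finset.prod_congr rfl fun w hw => ?_
        rw [Function.update_of_ne (Finset.ne_of_mem_erase hw)]
      simp only [h1, ← Finset.sum_mul]
      have h2 : ∑ s, b v (y v) s = 0 := by simp [b]
      rw [h2]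
      simp
  · intro x hx
    simp only [g]
    rw [Finset.sum_eq_single (E.piecewise x one)]
    · rw [hf, Finset.prod_eq_one, mul_one]
      intro v hv
      simp [b, hv, hx v hv]
    · intro y hy hne
      have hy' := (Finset.mem_filter.mp hy).2
      have : ∃ v ∈ E, x v ≠ y v := by
        by_contra hcon
        push Not at hcon
        apply hne
        ext v
        by_cases hv : v ∈ E
        · simp [hv, hcon v hv]
        · simp [hv, hy'.2 v hv]
      obtain ⟨v, hv, hxy⟩ := this
      rw [Finset.prod_eq_zero hv, mul_zero]
      simp [b, hxy, hx v hv]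
    · intro hn
      exfalso
      apply hn
      simp only [Y, Finset.mem_filter, Finset.mem_univ, true_and]
      constructor
      · intro v hv
        simpa [hv] using hx v hv
      · intro v hv
        simp [hv]

end Averages

/-! ### Marginals and log-linear parameters in terms of averages -/

section Bridge

variable {X : V → Type} [∀ v, Fintype (X v)] [∀ v, DecidableEq (X v)] [∀ v, Nonempty (X v)]

/-- The restriction of a full cell to the variables in `E`. -/
def restr {X : V → Type} (E : Finset V) (x : ∀ v, X v) : Cell X E := fun w => x w.1

/-- The number of full cells that extend a given cell of the marginal table `E`. -/
noncomputable def fiberCard (X : V → Type) [∀ v, Fintype (X v)] (E : Finset V) : ℝ :=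
  ∏ v ∈ Finset.univ \ E, (Fintype.card (X v) : ℝ)

theorem fiberCard_pos (E : Finset V) : 0 < fiberCard X E :=
  Finset.prod_pos fun v _ => by exact_mod_cast Fintype.card_pos

theorem restr_surjective (E : Finset V) (e : Cell X E) : ∃ x : ∀ v, X v, restr E x = e := by
  classical
  refine ⟨fun v => if h : v ∈ E then e ⟨v, h⟩ else Classical.arbitrary _, ?_⟩
  funext w
  simp [restr]

theorem card_fiber (M : Finset V) (x : ∀ v, X v) :
    ((Finset.univ.filter fun v : ∀ v, X v => ∀ w : {x // x ∈ M}, v w.1 = x w.1).card : ℝ)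
      = fiberCard X M := by
  have h : (Finset.univ.filter fun v : ∀ v, X v => ∀ w : {x // x ∈ M}, v w.1 = x w.1)
      = Fintype.piFinset fun v => if v ∈ M then {x v} else Finset.univ := by
    ext y
    simp only [Finset.mem_filter, Finset.mem_univ, true_and, Fintype.mem_piFinset, Subtype.forall]
    refine forall_congr' fun v => ?_
    by_cases hv : v ∈ M <;> simp [hv]
  rw [h, Fintype.card_piFinset, fiberCard, Finset.sdiff_eq_filter, Finset.prod_filter]
  push_cast
  refine Finset.prod_congr rfl fun v _ => ?_
  by_cases hv : v ∈ M <;> simp [hv]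

theorem sum_agree (P : (∀ v, X v) → ℝ) (M : Finset V) (x : ∀ v, X v) :
    (∑ v : ∀ v, X v, if ∀ w : {x // x ∈ M}, v w.1 = x w.1 then P v else 0)
      = fiberCard X M * avg X M P x := by
  have h := sum_piecewise_swap M
    (fun v (_ : ∀ v, X v) => if ∀ w : {x // x ∈ M}, v w.1 = x w.1 then P v else 0)
  have h1 : ∀ v y : ∀ v, X v,
      (if ∀ w : {x // x ∈ M}, M.piecewise v y w.1 = x w.1 then P (M.piecewise v y) else 0)
      = if ∀ w : {x // x ∈ M}, v w.1 = x w.1 then P (M.piecewise x y) else 0 := by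
    intro v y
    have h2 : (∀ w : {x // x ∈ M}, M.piecewise v y w.1 = x w.1) ↔
        ∀ w : {x // x ∈ M}, v w.1 = x w.1 := by
      refine forall_congr' fun w => ?_
      simp [w.2]
    simp only [h2]
    split_ifs with h3
    · congr 1
      ext u
      by_cases hu : u ∈ M
      · simp [hu, h3 ⟨u, hu⟩]
      · simp [hu]
    · rfl
  simp only [h1, Finset.sum_const, Finset.card_univ, nsmul_eq_mul, ← Finset.mul_sum] at h
  rw [Finset.sum_comm] at h
  have h4 : ∀ y : ∀ v, X v,
      (∑ v : ∀ v, X v, if ∀ w : {x // x ∈ M}, v w.1 = x w.1 then P (M.piecewise x y) else 0)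
      = fiberCard X M * P (M.piecewise x y) := by
    intro y
    rw [← Finset.sum_filter, Finset.sum_const, nsmul_eq_mul, card_fiber]
  simp only [h4, ← Finset.mul_sum] at h
  rw [avg_apply]
  have hc := card_omega_ne (X := X)
  field_simp
  linarith

theorem marginal_restr (P : (∀ v, X v) → ℝ) (M : Finset V) (x : ∀ v, X v) :
    marginal X P M (restr M x) = fiberCard X M * avg X M P x := by
  rw [← sum_agree]
  rfl

theorem sum_restr (M : Finset V) (L : Cell X M → ℝ) :
    ∑ x : ∀ v, X v, L (restr M x) = fiberCard X M * ∑ m, L m := by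
  have h1 : ∀ x : ∀ v, X v, L (restr M x)
      = ∑ m : Cell X M, if ∀ w : {x // x ∈ M}, x w.1 = m w then L m else 0 := by
    intro x
    rw [Finset.sum_eq_single (restr M x)]
    · simp [restr]
    · intro m _ hm
      rw [if_neg]
      intro h
      exact hm (funext fun w => (h w).symm)
    · simp
  simp only [h1]
  rw [Finset.sum_comm, Finset.mul_sum]
  refine Finset.sum_congr rfl fun m _ => ?_
  obtain ⟨x, rfl⟩ := restr_surjective M m
  have := sum_agree (fun _ => L (restr M x)) M x
  rw [avg_const] at this
  exact this

theorem card_cell_sdiff {E M : Finset V} (h : E ⊆ M) :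
    (Fintype.card (Cell X (M \ E)) : ℝ) * fiberCard X M = fiberCard X E := by
  have h1 : (Fintype.card (Cell X (M \ E)) : ℝ) = ∏ v ∈ M \ E, (Fintype.card (X v) : ℝ) := by
    rw [Fintype.card_pi]
    push_cast
    exact Finset.prod_coe_sort (M \ E) (fun v => (Fintype.card (X v) : ℝ))
  rw [h1, fiberCard, fiberCard, ← Finset.prod_union]
  · congr 1
    ext v
    simp only [Finset.mem_union, Finset.mem_sdiff, Finset.mem_univ, true_and]
    constructor
    · rintro (h2 | h2)
      · exact h2.2
      · exact fun h3 => h2 (h h3)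
    · intro h2
      by_cases hv : v ∈ M
      · exact Or.inl ⟨hv, h2⟩
      · exact Or.inr hv
  · exact Finset.disjoint_left.mpr fun v h2 h3 =>
      (Finset.mem_sdiff.mp h3).2 (Finset.mem_sdiff.mp h2).1

theorem average_cells {E M : Finset V} (h : E ⊆ M) (L : Cell X M → ℝ) (x : ∀ v, X v) :
    (Fintype.card (Cell X (M \ E)) : ℝ)⁻¹ *
      ∑ m : Cell X M, (if ∀ (w : V) (hE : w ∈ E) (hM : w ∈ M), m ⟨w, hM⟩ = restr E x ⟨w, hE⟩
        then L m else 0)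
    = avg X E (fun y => L (restr M y)) x := by
  have h1 := sum_agree (fun y => L (restr M y)) E x
  have h2 := sum_restr M (fun m : Cell X M =>
    if ∀ (w : V) (hE : w ∈ E) (hM : w ∈ M), m ⟨w, hM⟩ = restr E x ⟨w, hE⟩ then L m else 0)
  have h3 : ∀ y : ∀ v, X v,
      (∀ (w : V) (hE : w ∈ E) (hM : w ∈ M), restr M y ⟨w, hM⟩ = restr E x ⟨w, hE⟩) ↔
      ∀ w : {x // x ∈ E}, y w.1 = x w.1 := fun y =>
    ⟨fun hy w => hy w.1 w.2 (h w.2), fun hy w hE _ => hy ⟨w, hE⟩⟩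
  simp only [h3] at h2
  rw [h2] at h1
  have h4 := card_cell_sdiff (X := X) h
  have h5 := fiberCard_pos (X := X) M
  have h6 : (Fintype.card (Cell X (M \ E)) : ℝ) ≠ 0 := by exact_mod_cast Fintype.card_ne_zero
  rw [← h4] at h1
  field_simp
  have h7 := h5.ne'
  apply mul_left_cancel₀ h7
  linarith

theorem mllp_eq_interaction_marginal (P : (∀ v, X v) → ℝ) {M E : Finset V} (h : E ⊆ M)
    (x : ∀ v, X v) :
    mllp X P M E (restr E x)
      = interaction X E (fun y => Real.log (marginal X P M (restr M y))) x := by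
  induction E using Finset.strongInduction with
  | H E ih =>
    rw [mllp, interaction_eq, average_cells h (fun m => Real.log (marginal X P M m)), Pi.sub_apply,
      Finset.sum_apply]
    congr 1
    refine (Finset.sum_attach (E.powerset.erase E)
      (fun F => mllp X P M F (restr F x))).trans ?_
    refine Finset.sum_congr rfl fun F hF => ?_
    have hF' := Finset.mem_ssubsets.mp hF
    exact ih F hF' (hF'.1.trans h)

/-- The marginal log-linear parameters are the interactions of the logarithm of the average. -/
theorem mllp_eq_interaction {P : (∀ v, X v) → ℝ} {M E : Finset V} (h : E ⊆ M)
    (hE : E.Nonempty) (hP : ∀ x, 0 < avg X M P x) (x : ∀ v, X v) :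
    mllp X P M E (restr E x) = interaction X E (fun y => Real.log (avg X M P y)) x := by
  rw [mllp_eq_interaction_marginal P h]
  have h1 : (fun y => Real.log (marginal X P M (restr M y)))
      = (fun _ => Real.log (fiberCard X M)) + fun y => Real.log (avg X M P y) := by
    ext y
    rw [marginal_restr, Real.log_mul (fiberCard_pos M).ne' (hP y).ne']
    rfl
  rw [h1, map_add, interaction_const hE, zero_add]

end Bridge

/-! ### The mixed parameterization of a single marginal table -/

section Mixed

variable {X : V → Type} [∀ v, Fintype (X v)] [∀ v, DecidableEq (X v)] [∀ v, Nonempty (X v)]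

theorem sub_mul_log_sub_nonneg {a b : ℝ} (ha : 0 < a) (hb : 0 < b) :
    0 ≤ (a - b) * (Real.log a - Real.log b) := by
  rcases le_total a b with h | h
  · exact mul_nonneg_of_nonpos_of_nonpos (sub_nonpos.mpr h)
      (sub_nonpos.mpr (Real.log_le_log ha h))
  · exact mul_nonneg (sub_nonneg.mpr h) (sub_nonneg.mpr (Real.log_le_log hb h))

theorem eq_of_sub_mul_log_sub {a b : ℝ} (ha : 0 < a) (hb : 0 < b)
    (h : (a - b) * (Real.log a - Real.log b) = 0) : a = b := by
  rcases mul_eq_zero.mp h with h | h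
  · linarith
  · exact Real.log_injOn_pos ha hb (by linarith)

/-- Uniqueness: a positive table on `M` is determined by its marginals in a family `I` together
with the interactions outside `I`. The inner product of the difference of two such tables with the
difference of their logarithms vanishes, and each of its terms is nonnegative. -/
theorem mixed_unique {M : Finset V} (I : Finset V → Prop) {p q : (∀ v, X v) → ℝ}
    (hp : ∀ x, 0 < p x) (hq : ∀ x, 0 < q x) (hpM : avg X M p = p) (hqM : avg X M q = q)
    (h1 : ∀ E ⊆ M, I E → avg X E p = avg X E q)
    (h2 : ∀ E ⊆ M, ¬ I E → interaction X E (fun x => Real.log (p x))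
      = interaction X E (fun x => Real.log (q x))) : p = q := by
  set D : (∀ v, X v) → ℝ := (fun x => Real.log (p x)) - fun x => Real.log (q x) with hD
  have hDM : avg X M D = D := by
    rw [hD, map_sub, avg_comp hpM, avg_comp hqM]
  have hsum : ∑ x, (p - q) x * D x = 0 := by
    rw [← hDM, ← sum_interaction]
    simp only [Finset.sum_apply, Finset.mul_sum]
    rw [Finset.sum_comm]
    refine Finset.sum_eq_zero fun E hE => ?_
    have hE := Finset.mem_powerset.mp hE
    by_cases hI : I E
    · have h3 : avg X E (interaction X E D) = interaction X E D := by
        rw [avg_interaction, if_pos subset_rfl]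
      rw [← h3, avg_selfAdjoint, map_sub, h1 E hE hI, sub_self]
      simp
    · rw [hD, map_sub, h2 E hE hI, sub_self]
      simp
  have hterm := (Finset.sum_eq_zero_iff_of_nonneg
    (fun x _ => sub_mul_log_sub_nonneg (hp x) (hq x))).mp hsum
  ext x
  exact eq_of_sub_mul_log_sub (hp x) (hq x) (hterm x (Finset.mem_univ x))

/-- `exp (θ + t) - r t` grows at least linearly in `|t|`. -/
theorem exp_sub_mul_ge {r : ℝ} (hr : 0 < r) (θ : ℝ) :
    ∃ C, ∀ t, r * |t| - C ≤ Real.exp (θ + t) - r * t := by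
  refine ⟨2 * r * |Real.log (2 * r) - θ - 1|, fun t => ?_⟩
  have h1 : 0 ≤ 2 * r * |Real.log (2 * r) - θ - 1| := by positivity
  rcases le_total t 0 with ht | ht
  · rw [abs_of_nonpos ht]
    have := Real.exp_pos (θ + t)
    nlinarith
  · rw [abs_of_nonneg ht]
    have h2 := Real.add_one_le_exp (θ + t - Real.log (2 * r))
    rw [Real.exp_sub, Real.exp_log (by positivity), le_div_iff₀ (by positivity)] at h2
    have h3 := le_abs_self (Real.log (2 * r) - θ - 1)
    nlinarith

/-- Existence of the stationary point of the convex coercive function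
`φ ↦ ∑ x, (exp (θ x + φ x) - R x * φ x)` on a space `L` of functions. -/
theorem exists_stationary (L : Submodule ℝ ((∀ v, X v) → ℝ)) (θ R : (∀ v, X v) → ℝ)
    (hR : ∀ x, 0 < R x) :
    ∃ φ ∈ L, ∀ h ∈ L, ∑ x, (Real.exp (θ x + φ x) - R x) * h x = 0 := by
  let F : L → ℝ := fun φ => ∑ x, (Real.exp (θ x + φ.1 x) - R x * φ.1 x)
  have hcont : Continuous F := by
    refine continuous_finsetSum _ fun x _ => ?_
    have : Continuous fun φ : L => φ.1 x := (continuous_apply x).comp continuous_subtype_val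
    exact (Real.continuous_exp.comp (continuous_const.add this)).sub (continuous_const.mul this)
  obtain ⟨x0, -, hx0⟩ := Finset.exists_min_image Finset.univ R Finset.univ_nonempty
  choose C hC using fun x => exp_sub_mul_ge (hR x) (θ x)
  have hcoer : Filter.Tendsto F (Filter.cocompact L) Filter.atTop := by
    have hlow : ∀ φ : L, R x0 * ‖φ‖ - ∑ x, C x ≤ F φ := by
      intro φ
      have h1 : ‖φ‖ ≤ ∑ x, |φ.1 x| := by
        rw [Submodule.coe_norm]
        refine (pi_norm_le_iff_of_nonneg (Finset.sum_nonneg fun x _ => abs_nonneg _)).mpr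
          fun x => ?_
        exact Finset.single_le_sum (f := fun x => |φ.1 x|) (fun x _ => abs_nonneg _)
          (Finset.mem_univ x)
      have h2 : R x0 * ∑ x, |φ.1 x| ≤ ∑ x, R x * |φ.1 x| := by
        rw [Finset.mul_sum]
        exact Finset.sum_le_sum fun x hx =>
          mul_le_mul_of_nonneg_right (hx0 x hx) (abs_nonneg _)
      have h3 : ∑ x, (R x * |φ.1 x| - C x) ≤ F φ :=
        Finset.sum_le_sum fun x _ => hC x _
      rw [Finset.sum_sub_distrib] at h3
      have h4 := mul_le_mul_of_nonneg_left h1 (hR x0).le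
      linarith
    refine Filter.tendsto_atTop_mono hlow ?_
    exact Filter.tendsto_atTop_add_const_right _ _
      ((tendsto_norm_cocompact_atTop (E := L)).const_mul_atTop (hR x0))
  obtain ⟨φ, hφ⟩ := hcont.exists_forall_le hcoer
  refine ⟨φ.1, φ.2, fun h hh => ?_⟩
  have hmin : IsLocalMin (fun t : ℝ => F (φ + t • ⟨h, hh⟩)) 0 := by
    refine Filter.Eventually.of_forall fun t => ?_
    simpa using hφ _
  have hder : HasDerivAt (fun t : ℝ => F (φ + t • ⟨h, hh⟩))
      (∑ x, (Real.exp (θ x + φ.1 x) - R x) * h x) 0 := by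
    refine HasDerivAt.fun_sum fun x _ => ?_
    have h1 : HasDerivAt (fun t : ℝ => φ.1 x + t * h x) (h x) 0 := by
      simpa using ((hasDerivAt_id (0 : ℝ)).mul_const (h x)).const_add (φ.1 x)
    have h2 := (h1.const_add (θ x)).exp.sub (h1.const_mul (R x))
    rw [zero_mul, add_zero, ← sub_mul] at h2
    exact h2
  exact hmin.hasDerivAt_eq_zero hder

/-- Existence: the marginals in a descending family `I` of effects can be prescribed compatibly
with a given positive table `R`, and the remaining interactions on `M` arbitrarily. -/
theorem mixed_exists {M : Finset V} (I : Finset (Finset V))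
    (hIM : ∀ E ∈ I, E ⊆ M) (hI : ∀ E ∈ I, ∀ F ⊆ E, F ∈ I)
    {R : (∀ v, X v) → ℝ} (hR : ∀ x, 0 < R x)
    {g : Finset V → (∀ v, X v) → ℝ} (hg : ∀ E, IsPure X E (g E)) :
    ∃ P : (∀ v, X v) → ℝ, (∀ x, 0 < P x) ∧ avg X M P = P ∧
      (∀ E ∈ I, avg X E P = avg X E R) ∧
      ∀ E ⊆ M, E ∉ I → interaction X E (fun x => Real.log (avg X M P x)) = g E := by
  let L : Submodule ℝ ((∀ v, X v) → ℝ) := ⨆ E ∈ I, LinearMap.range (avg X E)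
  have hmem : ∀ E ∈ I, ∀ φ, avg X E φ ∈ L := fun E hE φ =>
    (le_iSup₂ (f := fun E (_ : E ∈ I) => LinearMap.range (avg X E)) E hE) ⟨φ, rfl⟩
  have hLM : L ≤ LinearMap.ker (avg X M - LinearMap.id) := by
    refine iSup₂_le fun E hE => ?_
    rintro _ ⟨φ, rfl⟩
    rw [LinearMap.mem_ker, LinearMap.sub_apply, LinearMap.id_apply,
      avg_avg_of_subset' (hIM E hE), sub_self]
  have hLI : ∀ F, F ∉ I → L ≤ LinearMap.ker (interaction X F) := by
    intro F hF
    refine iSup₂_le fun E hE => ?_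
    rintro _ ⟨φ, rfl⟩
    rw [LinearMap.mem_ker, interaction_avg, if_neg fun h => hF (hI E hE F h)]
  let θ : (∀ v, X v) → ℝ := ∑ E ∈ M.powerset \ I, g E
  have hθM : avg X M θ = θ := by
    simp only [θ, map_sum]
    refine Finset.sum_congr rfl fun E hE => ?_
    rw [hg E M, if_pos (Finset.mem_powerset.mp (Finset.mem_sdiff.mp hE).1)]
  obtain ⟨φ, hφL, hφ⟩ := exists_stationary L θ R hR
  have hφM : avg X M φ = φ := by
    have := hLM hφL
    rwa [LinearMap.mem_ker, LinearMap.sub_apply, LinearMap.id_apply, sub_eq_zero] at this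
  let P : (∀ v, X v) → ℝ := fun x => Real.exp (θ x + φ x)
  have hPM : avg X M P = P := by
    have : avg X M (θ + φ) = θ + φ := by rw [map_add, hθM, hφM]
    exact avg_comp this Real.exp
  refine ⟨P, fun x => Real.exp_pos _, hPM, fun E hE => ?_, fun E hE hEI => ?_⟩
  · -- test stationarity against `avg E (P - R)` itself
    have h1 := hφ _ (hmem E hE (P - R))
    have h2 : ∑ x, avg X E (P - R) x * avg X E (P - R) x = 0 := by
      rw [← avg_selfAdjoint, avg_avg_of_subset subset_rfl]
      exact h1
    have h3 := (Finset.sum_eq_zero_iff_of_nonneg (fun x _ => mul_self_nonneg _)).mp h2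
    ext x
    have h4 := mul_self_eq_zero.mp (h3 x (Finset.mem_univ x))
    rw [map_sub, Pi.sub_apply] at h4
    linarith
  · rw [hPM]
    have h1 : (fun x => Real.log (P x)) = θ + φ := by
      ext x
      simp [P]
    have h2 : interaction X E φ = 0 := hLI E hEI hφL
    rw [h1, map_add, h2, add_zero]
    simp only [θ]
    rw [interaction_sum_pure hg, if_pos]
    exact Finset.mem_sdiff.mpr ⟨Finset.mem_powerset.mpr hE, hEI⟩

end Mixed

/-! ### Gluing marginals along a running intersection ordering -/

section Glue

variable {X : V → Type} [∀ v, Fintype (X v)] [∀ v, DecidableEq (X v)] [∀ v, Nonempty (X v)]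

/-- Two positive tables with the same marginal on `U ∩ H` are glued by conditional
independence. -/
theorem glue_two (U H : Finset V) {P R : (∀ v, X v) → ℝ} (hP : ∀ x, 0 < P x)
    (hR : ∀ x, 0 < R x) (h : avg X (U ∩ H) P = avg X (U ∩ H) R) :
    ∃ Q : (∀ v, X v) → ℝ, (∀ x, 0 < Q x) ∧ avg X U Q = avg X U P ∧ avg X H Q = avg X H R := by
  have hS := avg_pos (U ∩ H) hP
  have dep : ∀ A, U ∩ H ⊆ A → ∀ T : (∀ v, X v) → ℝ,
      avg X A (fun x => avg X A T x * (avg X (U ∩ H) P x)⁻¹)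
        = fun x => avg X A T x * (avg X (U ∩ H) P x)⁻¹ := by
    intro A hA T
    refine avg_eq_self fun x y => ?_
    rw [avg_piecewise, piecewise_of_avg_eq_self (avg_avg_of_subset' hA P)]
  refine ⟨(fun x => avg X U P x * (avg X (U ∩ H) P x)⁻¹) * avg X H R, fun x => ?_, ?_, ?_⟩
  · exact mul_pos (mul_pos (avg_pos U hP x) (inv_pos.mpr (hS x))) (avg_pos H hR x)
  · rw [avg_mul_left (dep U Finset.inter_subset_left P), avg_avg, ← h]
    ext x
    have := (hS x).ne'
    simp only [Pi.mul_apply]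
    field_simp
  · have e : (fun x => avg X U P x * (avg X (U ∩ H) P x)⁻¹) * avg X H R
        = (fun x => avg X H R x * (avg X (U ∩ H) P x)⁻¹) * avg X U P := by
      ext x
      simp only [Pi.mul_apply]
      ring
    rw [e, avg_mul_left (dep H Finset.inter_subset_right R), avg_avg, Finset.inter_comm H U]
    ext x
    have := (hS x).ne'
    simp only [Pi.mul_apply]
    field_simp

/-- The running intersection property of the first `l` terms of a sequence of sets: each set
meets its predecessors inside a single one of them. -/
def RunningIntersection (l : ℕ) (H : ℕ → Finset V) : Prop :=
  ∀ h < l, 1 ≤ h → ∃ g < h, ∀ g' < h, H g' ∩ H h ⊆ H g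

/-- Pairwise compatible positive marginals on a sequence with running intersections have a
positive joint distribution. -/
theorem glue_sequence {l : ℕ} {H : ℕ → Finset V} (hH : RunningIntersection l H)
    {p : ℕ → (∀ v, X v) → ℝ} (hp : ∀ h x, 0 < p h x)
    (hc : ∀ g < l, ∀ h < l, avg X (H g ∩ H h) (p g) = avg X (H g ∩ H h) (p h)) :
    ∃ P : (∀ v, X v) → ℝ, (∀ x, 0 < P x) ∧ ∀ h < l, avg X (H h) P = avg X (H h) (p h) := by
  suffices ∀ n ≤ l, ∃ P : (∀ v, X v) → ℝ, (∀ x, 0 < P x) ∧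
      ∀ h < n, avg X (H h) P = avg X (H h) (p h) from this l le_rfl
  intro n
  induction n with
  | zero => exact fun _ => ⟨p 0, hp 0, by simp⟩
  | succ n ih =>
    intro hn
    rcases Nat.eq_zero_or_pos n with rfl | hn0
    · refine ⟨p 0, hp 0, fun h hh => ?_⟩
      obtain rfl : h = 0 := by omega
      rfl
    obtain ⟨P, hP, hPm⟩ := ih (by omega)
    obtain ⟨g, hg, hgs⟩ := hH n (by omega) hn0
    let U : Finset V := (Finset.range n).biUnion H
    have hS : U ∩ H n = H g ∩ H n := by
      apply Finset.Subset.antisymm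
      · intro v hv
        simp only [U, Finset.mem_inter, Finset.mem_biUnion, Finset.mem_range] at hv
        obtain ⟨⟨g', hg', hv1⟩, hv2⟩ := hv
        exact Finset.mem_inter.mpr ⟨hgs g' hg' (Finset.mem_inter.mpr ⟨hv1, hv2⟩), hv2⟩
      · exact Finset.inter_subset_inter_right
          (Finset.subset_biUnion_of_mem H (Finset.mem_range.mpr hg))
    have hcomp : avg X (U ∩ H n) P = avg X (U ∩ H n) (p n) := by
      rw [hS, ← hc g (by omega) n (by omega), ← avg_avg_of_subset Finset.inter_subset_left P,
        hPm g hg, avg_avg_of_subset Finset.inter_subset_left]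
    obtain ⟨Q, hQ, hQU, hQH⟩ := glue_two U (H n) hP (hp n) hcomp
    refine ⟨Q, hQ, fun h hh => ?_⟩
    rcases Nat.lt_succ_iff_lt_or_eq.mp hh with h1 | rfl
    · have hsub : H h ⊆ U := Finset.subset_biUnion_of_mem H (Finset.mem_range.mpr h1)
      rw [← avg_avg_of_subset hsub, hQU, avg_avg_of_subset hsub, hPm h h1]
    · exact hQH

end Glue

/-! ### Combinatorial obstructions to a joint distribution -/

section Obstruction

/-- The subsets of members of a family. -/
def faces (𝓕 : Finset (Finset V)) : Finset (Finset V) :=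
  Finset.univ.filter fun T => ∃ K ∈ 𝓕, T ⊆ K

theorem mem_faces {𝓕 : Finset (Finset V)} {T : Finset V} : T ∈ faces 𝓕 ↔ ∃ K ∈ 𝓕, T ⊆ K := by
  simp [faces]

theorem faces_mono {𝓕 : Finset (Finset V)} {S T : Finset V} (hT : T ∈ faces 𝓕) (h : S ⊆ T) :
    S ∈ faces 𝓕 := by
  obtain ⟨K, hK, hTK⟩ := mem_faces.mp hT
  exact mem_faces.mpr ⟨K, hK, h.trans hTK⟩

/-- Sign vectors on the set of variables. -/
def IsSign (z : V → ℝ) : Prop := ∀ v, z v = 1 ∨ z v = -1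

/-- Moments `c` of sign variables that define nonnegative tables on every member of the family
satisfy every linear inequality, with coefficients `d` on the faces, valid for all sign vectors.
By duality this says that such moments on the faces come from a joint distribution. -/
def NoObstruction (𝓕 : Finset (Finset V)) : Prop :=
  ∀ c d : Finset V → ℝ, c ∅ = 1 →
    (∀ K ∈ 𝓕, ∀ z, IsSign z → 0 ≤ ∑ T ∈ K.powerset, c T * ∏ v ∈ T, z v) →
    (∀ z, IsSign z → 0 ≤ ∑ T ∈ faces 𝓕, d T * ∏ v ∈ T, z v) →
    0 ≤ ∑ T ∈ faces 𝓕, d T * c T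

theorem IsSign.prod {z : V → ℝ} (hz : IsSign z) (T : Finset V) :
    ∏ v ∈ T, z v = 1 ∨ ∏ v ∈ T, z v = -1 := by
  induction T using Finset.induction_on with
  | empty => simp
  | insert v T hv ih =>
    rw [Finset.prod_insert hv]
    rcases hz v with h | h <;> rcases ih with hT | hT <;> simp [h, hT]

/-- The boundary of a simplex is obstructed: prescribe the parities of all the sets `W \ {w}`,
exactly one of them odd. -/
theorem conformal_step {𝓕 : Finset (Finset V)} (hN : NoObstruction 𝓕) {W : Finset V}
    (hcard : 3 ≤ W.card) (h : ∀ w ∈ W, W.erase w ∈ faces 𝓕) : W ∈ faces 𝓕 := by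
  by_contra hW
  obtain ⟨w0, hw0⟩ : W.Nonempty := Finset.card_pos.mp (by omega)
  let s : V → ℝ := fun w => if w = w0 then -1 else 1
  have hs : ∀ w, s w * s w = 1 := fun w => by by_cases hw : w = w0 <;> simp [s, hw]
  have hsS : IsSign s := fun w => by by_cases hw : w = w0 <;> simp [s, hw]
  have hne : ∀ w ∈ W, W.erase w ≠ ∅ := fun w hw he => by
    have := Finset.card_erase_of_mem hw
    rw [he, Finset.card_empty] at this
    omega
  have hne0 : ∀ w ∈ W, W.erase w ≠ {w0} := fun w hw he => by
    have := Finset.card_erase_of_mem hw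
    rw [he, Finset.card_singleton] at this
    omega
  have hinj : ∀ w ∈ W, ∀ w' ∈ W, W.erase w = W.erase w' → w = w' := fun w hw w' hw' he => by
    by_contra hcon
    have : w ∈ W.erase w' := Finset.mem_erase.mpr ⟨hcon, hw⟩
    rw [← he] at this
    exact Finset.notMem_erase w W this
  let c : Finset V → ℝ := fun T =>
    (if T = ∅ then 1 else 0) + ∑ w ∈ W, if T = W.erase w then s w else 0
  let d : Finset V → ℝ := fun T =>
    (if T = ∅ then (W.card : ℝ) - 1 else 0) + (if T = {w0} then 1 else 0)
      - ∑ w ∈ W, if T = W.erase w then s w else 0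
  have hempty : ∅ ∈ faces 𝓕 := faces_mono (h w0 hw0) (Finset.empty_subset _)
  have hsing : {w0} ∈ faces 𝓕 := by
    obtain ⟨w, hw, hww⟩ := Finset.exists_mem_ne (by omega : 1 < W.card) w0
    exact faces_mono (h w hw)
      (Finset.singleton_subset_iff.mpr (Finset.mem_erase.mpr ⟨hww.symm, hw0⟩))
  have hd : ∀ y : Finset V → ℝ, ∑ T ∈ faces 𝓕, d T * y T
      = ((W.card : ℝ) - 1) * y ∅ + y {w0} - ∑ w ∈ W, s w * y (W.erase w) := by
    intro y
    simp only [d, sub_mul, add_mul, Finset.sum_sub_distrib, Finset.sum_add_distrib,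
      Finset.sum_mul, ite_mul, zero_mul, one_mul]
    rw [Finset.sum_comm]
    simp only [Finset.sum_ite_eq', hempty, hsing, if_true]
    congr 1
    exact Finset.sum_congr rfl fun w hw => by rw [if_pos (h w hw)]
  have hc0 : c ∅ = 1 := by
    simp only [c, if_true]
    rw [Finset.sum_eq_zero, add_zero]
    exact fun w hw => if_neg (hne w hw).symm
  have hc1 : c {w0} = 0 := by
    simp only [c]
    rw [Finset.sum_eq_zero fun w hw => if_neg (hne0 w hw).symm, if_neg (by simp), add_zero]
  have hcw : ∀ w ∈ W, c (W.erase w) = s w := by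
    intro w hw
    simp only [c]
    rw [if_neg (hne w hw), zero_add, Finset.sum_eq_single w]
    · simp
    · exact fun w' hw' hww => if_neg fun he => hww (hinj w hw w' hw' he).symm
    · exact fun hn => absurd hw hn
  have key := hN c d hc0 ?_ ?_
  · rw [hd, hc0, hc1, Finset.sum_congr rfl fun w hw => by rw [hcw w hw, hs w]] at key
    simp only [Finset.sum_const, nsmul_eq_mul] at key
    linarith
  · intro K hK z hz
    have hWK : ¬ W ⊆ K := fun hWK => hW (mem_faces.mpr ⟨K, hK, hWK⟩)
    obtain ⟨w1, hw1, hw1K⟩ := Finset.not_subset.mp hWK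
    have e : ∑ T ∈ K.powerset, c T * ∏ v ∈ T, z v
        = 1 + ∑ w ∈ W, if W.erase w ⊆ K then s w * ∏ v ∈ W.erase w, z v else 0 := by
      simp only [c, add_mul, Finset.sum_add_distrib, Finset.sum_mul, ite_mul, zero_mul, one_mul]
      rw [Finset.sum_comm]
      simp only [Finset.sum_ite_eq', Finset.mem_powerset, Finset.empty_subset, if_true,
        Finset.prod_empty]
    rw [e, Finset.sum_eq_single w1]
    · split_ifs
      · rcases hsS w1 with h1 | h1 <;> rcases hz.prod (W.erase w1) with h2 | h2 <;>
          rw [h1, h2] <;> norm_num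
      · norm_num
    · intro w hw hww
      rw [if_neg]
      exact fun hsub => hw1K (hsub (Finset.mem_erase.mpr ⟨hww.symm, hw1⟩))
    · exact fun hn => absurd hw1 hn
  · intro z hz
    rw [hd]
    simp only [Finset.prod_empty, Finset.prod_singleton, mul_one]
    have hle : ∀ w ∈ W, s w * ∏ v ∈ W.erase w, z v ≤ 1 := by
      intro w _
      rcases hsS w with h1 | h1 <;> rcases hz.prod (W.erase w) with h2 | h2 <;>
        rw [h1, h2] <;> norm_num
    rcases hz w0 with hz0 | hz0
    · have := Finset.sum_le_sum hle
      simp only [Finset.sum_const, nsmul_eq_mul, mul_one] at this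
      linarith
    · have hex : ∃ w ∈ W, s w * ∏ v ∈ W.erase w, z v = -1 := by
        by_contra hcon
        push Not at hcon
        have hall : ∀ w ∈ W, ∏ v ∈ W.erase w, z v = s w := by
          intro w hw
          have := hcon w hw
          rcases hsS w with h1 | h1 <;> rcases hz.prod (W.erase w) with h2 | h2 <;>
            rw [h1, h2] at this ⊢ <;> norm_num at this
        have hC := Finset.mul_prod_erase W z hw0
        rw [hall w0 hw0, hz0] at hC
        have hone : ∏ v ∈ W.erase w0, z v = 1 := by
          refine Finset.prod_eq_one fun w hw => ?_
          have hw' := Finset.mem_erase.mp hw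
          have hC' := Finset.mul_prod_erase W z hw'.2
          rw [hall w hw'.2, ← hC] at hC'
          simpa [s, hw'.1] using hC'
        rw [hall w0 hw0] at hone
        norm_num [s] at hone
      obtain ⟨w, hw, hwe⟩ := hex
      have h1 : ∑ w ∈ W.erase w, s w * ∏ v ∈ W.erase w, z v ≤ ∑ w ∈ W.erase w, 1 :=
        Finset.sum_le_sum fun u hu => hle u (Finset.mem_of_mem_erase hu)
      rw [← Finset.add_sum_erase _ _ hw, hwe, hz0]
      simp only [Finset.sum_const, nsmul_eq_mul, mul_one, Finset.card_erase_of_mem hw] at h1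
      rw [Nat.cast_sub (by omega)] at h1
      push_cast at h1
      linarith

theorem conformal {𝓕 : Finset (Finset V)} (hN : NoObstruction 𝓕) (hne : 𝓕.Nonempty)
    (W : Finset V) (h : ∀ u ∈ W, ∀ v ∈ W, {u, v} ∈ faces 𝓕) : W ∈ faces 𝓕 := by
  induction W using Finset.strongInduction with
  | H W ih =>
    rcases lt_or_ge W.card 3 with hc | hc
    · have hc' : W.card = 0 ∨ W.card = 1 ∨ W.card = 2 := by omega
      rcases hc' with h0 | h0 | h0
      · obtain ⟨K, hK⟩ := hne
        rw [Finset.card_eq_zero.mp h0]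
        exact mem_faces.mpr ⟨K, hK, Finset.empty_subset _⟩
      · obtain ⟨u, rfl⟩ := Finset.card_eq_one.mp h0
        simpa using h u (by simp) u (by simp)
      · obtain ⟨u, v, -, rfl⟩ := Finset.card_eq_two.mp h0
        exact h u (by simp) v (by simp)
    · exact conformal_step hN hc fun w hw => ih _ (Finset.erase_ssubset hw) fun u hu v hv =>
        h u (Finset.mem_of_mem_erase hu) v (Finset.mem_of_mem_erase hv)

theorem even_sum_nonneg {u : V → ℝ} (hu : IsSign u) (L : Finset V) :
    0 ≤ ∑ T ∈ L.powerset, if Even T.card then ∏ v ∈ T, u v else 0 := by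
  have h1 := Finset.prod_one_add (f := u) L
  have h2 := Finset.prod_one_add (f := fun v => -u v) L
  have p1 : 0 ≤ ∏ v ∈ L, (1 + u v) := Finset.prod_nonneg fun v _ => by
    rcases hu v with h | h <;> rw [h] <;> norm_num
  have p2 : 0 ≤ ∏ v ∈ L, (1 + -u v) := Finset.prod_nonneg fun v _ => by
    rcases hu v with h | h <;> rw [h] <;> norm_num
  rw [h1] at p1
  rw [h2] at p2
  have h3 : ∑ T ∈ L.powerset, (2 * if Even T.card then ∏ v ∈ T, u v else 0)
      = ∑ T ∈ L.powerset, ∏ v ∈ T, u v + ∑ T ∈ L.powerset, ∏ v ∈ T, -u v := by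
    rw [← Finset.sum_add_distrib]
    refine Finset.sum_congr rfl fun T _ => ?_
    rw [Finset.prod_neg]
    split_ifs with he
    · rw [he.neg_one_pow]; ring
    · rw [(Nat.not_even_iff_odd.mp he).neg_one_pow]; ring
  rw [← Finset.mul_sum] at h3
  linarith

/-- A cycle without chords, with one arc given as a connected set `B`, is obstructed: prescribe
equality along all the edges except between `y` and `B`, where opposite signs are prescribed. -/
theorem no_cycle {𝓕 : Finset (Finset V)} (hN : NoObstruction 𝓕) {a x y b b1 b2 : V}
    {B : Finset V}
    (hB : ∀ u ∈ B, Relation.ReflTransGen (fun u v => u ∈ B ∧ v ∈ B ∧ {u, v} ∈ faces 𝓕) b u)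
    (hyB : y ∉ B) (hax : {a, x} ∈ faces 𝓕) (hay : {a, y} ∈ faces 𝓕) (hya : y ≠ a)
    (hxy : {x, y} ∉ faces 𝓕) (haB : ∀ u ∈ B, {a, u} ∉ faces 𝓕)
    (hb1 : b1 ∈ B) (hb1x : {b1, x} ∈ faces 𝓕) (hb2 : b2 ∈ B) (hb2y : {b2, y} ∈ faces 𝓕) :
    False := by
  let W : Finset V := B ∪ {a, x, y}
  have hyx : y ≠ x := by
    rintro rfl
    apply hxy
    exact faces_mono hay (by simp)
  let c : Finset V → ℝ := fun T =>
    if T ⊆ W ∧ Even T.card then (if y ∈ T ∧ ∃ u ∈ B, u ∈ T then -1 else 1) else 0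
  let E : Finset (Finset V) := (faces 𝓕).filter fun T => T ⊆ W ∧ T.card = 2
  let d : Finset V → ℝ := fun T =>
    (if T = ∅ then (E.card : ℝ) - 2 else 0) - if T ∈ E then c T else 0
  have hempty : ∅ ∈ faces 𝓕 := faces_mono hax (Finset.empty_subset _)
  have hd : ∀ m : Finset V → ℝ, ∑ T ∈ faces 𝓕, d T * m T
      = ((E.card : ℝ) - 2) * m ∅ - ∑ T ∈ E, c T * m T := by
    intro m
    simp only [d, sub_mul (if _ then _ else _), Finset.sum_sub_distrib, ite_mul, zero_mul]
    simp only [Finset.sum_ite_eq', hempty, if_true]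
    congr 1
    rw [← Finset.sum_filter]
    refine Finset.sum_congr ?_ fun _ _ => rfl
    ext T
    simp only [Finset.mem_filter, E]
    tauto
  have hcE : ∀ T ∈ E, c T = 1 ∨ c T = -1 := by
    intro T hT
    obtain ⟨-, h1, h2⟩ := Finset.mem_filter.mp hT
    have : Even T.card := by rw [h2]; exact even_two
    simp only [c, h1, this, and_self, if_true]
    split_ifs <;> simp
  have hc0 : c ∅ = 1 := by simp [c]
  have key := hN c d hc0 ?_ ?_
  · have h1 : ∑ T ∈ E, c T * c T = E.card := by
      rw [Finset.sum_congr rfl fun T hT => show c T * c T = 1 by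
        rcases hcE T hT with h | h <;> rw [h] <;> norm_num]
      simp
    rw [hd, hc0, h1] at key
    linarith
  · intro K hK z hz
    let t : ℝ := if ∃ u ∈ B, u ∈ K then -1 else 1
    let u : V → ℝ := fun v => (if v = y then t else 1) * z v
    have hu : IsSign u := by
      intro v
      rcases hz v with h | h <;> by_cases hv : v = y <;> by_cases ht : ∃ u ∈ B, u ∈ K <;>
        simp [u, t, h, hv, ht] <;> simp [← hv, h]
    have h1 := even_sum_nonneg hu (K ∩ W)
    refine h1.trans_eq ?_
    have hsub : (K ∩ W).powerset ⊆ K.powerset :=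
      Finset.powerset_mono.mpr Finset.inter_subset_left
    rw [← Finset.sum_subset hsub]
    · refine Finset.sum_congr rfl fun T hT => ?_
      have hTL := Finset.mem_powerset.mp hT
      have hTK := hTL.trans Finset.inter_subset_left
      have hTW := hTL.trans Finset.inter_subset_right
      by_cases he : Even T.card
      · simp only [c, hTW, he, and_self, if_true, u, Finset.prod_mul_distrib,
          Finset.prod_ite_eq']
        congr 1
        by_cases hyT : y ∈ T
        · have hiff : (∃ u ∈ B, u ∈ T) ↔ ∃ u ∈ B, u ∈ K := by
            refine ⟨fun ⟨u, h1, h2⟩ => ⟨u, h1, hTK h2⟩, fun ⟨u, huB, huK⟩ => ?_⟩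
            -- `T` has even size, so it contains a second element besides `y`
            have h1T : 1 < T.card := by
              have : 0 < T.card := Finset.card_pos.mpr ⟨y, hyT⟩
              rcases he with ⟨r, hr⟩
              omega
            obtain ⟨v, hvT, hvy⟩ := Finset.exists_mem_ne h1T y
            have hvW := hTW hvT
            simp only [W, Finset.mem_union, Finset.mem_insert, Finset.mem_singleton] at hvW
            rcases hvW with hv | rfl | rfl | rfl
            · exact ⟨v, hv, hvT⟩
            · exact absurd (mem_faces.mpr ⟨K, hK, by
                simp [Finset.insert_subset_iff, hTK hvT, huK]⟩) (haB u huB)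
            · exact absurd (mem_faces.mpr ⟨K, hK, by
                simp [Finset.insert_subset_iff, hTK hvT, hTK hyT]⟩) hxy
            · exact absurd rfl hvy
          simp only [hyT, true_and, if_true, hiff, t]
        · simp [hyT]
      · simp [c, he]
    · intro T hT hT'
      have hTK := Finset.mem_powerset.mp hT
      have : ¬ T ⊆ W := fun hTW => hT' (Finset.mem_powerset.mpr (Finset.subset_inter hTK hTW))
      simp [c, this]
  · intro z hz
    rw [hd]
    simp only [Finset.prod_empty, mul_one]
    have hpm : ∀ T ∈ E, c T * ∏ v ∈ T, z v = 1 ∨ c T * ∏ v ∈ T, z v = -1 := by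
      intro T hT
      rcases hcE T hT with h1 | h1 <;> rcases hz.prod T with h2 | h2 <;>
        rw [h1, h2] <;> norm_num
    have hex : ∃ T ∈ E, c T * ∏ v ∈ T, z v = -1 := by
      by_contra hcon
      push Not at hcon
      have hall : ∀ p q : V, p ≠ q → {p, q} ∈ faces 𝓕 → p ∈ W → q ∈ W →
          (if y ∈ ({p, q} : Finset V) ∧ ∃ u ∈ B, u ∈ ({p, q} : Finset V) then (-1 : ℝ) else 1)
            * (z p * z q) = 1 := by
        intro p q hpq hf hp hq
        have hW : ({p, q} : Finset V) ⊆ W := by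
          simp [Finset.insert_subset_iff, hp, hq]
        have hT : ({p, q} : Finset V) ∈ E := by
          simp only [E, Finset.mem_filter]
          exact ⟨hf, hW, Finset.card_pair hpq⟩
        have h1 := (hpm _ hT).resolve_right (hcon _ hT)
        rw [Finset.prod_pair hpq] at h1
        have he : Even ({p, q} : Finset V).card := by
          rw [Finset.card_pair hpq]; exact even_two
        simpa only [c, hW, he, and_self, if_true] using h1
      have heq : ∀ p q : V, z p * z q = 1 → z p = z q := by
        intro p q h
        rcases hz p with h1 | h1 <;> rcases hz q with h2 | h2 <;> rw [h1, h2] at h ⊢ <;>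
          norm_num at h
      have haW : a ∈ W := by simp [W]
      have hxW : x ∈ W := by simp [W]
      have hyW : y ∈ W := by simp [W]
      have hBW : ∀ u ∈ B, u ∈ W := fun u hu => by simp [W, hu]
      have haB' : a ∉ B := fun h => haB a h (faces_mono hax (by simp))
      have edge : ∀ p q : V, p ≠ y → q ≠ y → {p, q} ∈ faces 𝓕 → p ∈ W → q ∈ W → z p = z q := by
        intro p q hp hq hf hpW hqW
        by_cases hpq : p = q
        · rw [hpq]
        have := hall p q hpq hf hpW hqW
        rw [if_neg, one_mul] at this
        · exact heq p q this
        · simp [hp.symm, hq.symm]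
      have e1 : z a = z x := edge a x hya.symm hyx.symm hax haW hxW
      have hne : ∀ u ∈ B, u ≠ y := fun u hu h => hyB (h ▸ hu)
      have e2 : z a = z y := by
        have := hall a y hya.symm hay haW hyW
        rw [if_neg, one_mul] at this
        · exact heq a y this
        · rintro ⟨-, u, huB, hu⟩
          simp only [Finset.mem_insert, Finset.mem_singleton] at hu
          rcases hu with rfl | rfl
          · exact haB' huB
          · exact hyB huB
      have e3 : ∀ u ∈ B, z b = z u := by
        intro u hu
        have := hB u hu
        clear hu
        induction this with
        | refl => rfl
        | tail _ h1 ih =>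
          rw [ih]
          exact edge _ _ (hne _ h1.1) (hne _ h1.2.1) h1.2.2 (hBW _ h1.1) (hBW _ h1.2.1)
      have e4 : z b1 = z x := edge b1 x (hne b1 hb1) hyx.symm hb1x (hBW _ hb1) hxW
      have e5 := hall b2 y (hne b2 hb2) hb2y (hBW _ hb2) hyW
      rw [if_pos ⟨by simp, b2, hb2, by simp⟩, ← e2, e1, ← e4, ← e3 b1 hb1, ← e3 b2 hb2] at e5
      rcases hz b with h | h <;> rw [h] at e5 <;> norm_num at e5
    obtain ⟨T0, hT0, hT0e⟩ := hex
    rw [← Finset.add_sum_erase _ _ hT0, hT0e]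
    have h1 : ∑ T ∈ E.erase T0, c T * ∏ v ∈ T, z v ≤ ∑ T ∈ E.erase T0, 1 :=
      Finset.sum_le_sum fun T hT => by
        rcases hpm T (Finset.mem_of_mem_erase hT) with h | h <;> rw [h]
        norm_num
    have hpos : 1 ≤ E.card := Finset.card_pos.mpr ⟨T0, hT0⟩
    simp only [Finset.sum_const, nsmul_eq_mul, mul_one, Finset.card_erase_of_mem hT0] at h1
    rw [Nat.cast_sub hpos] at h1
    push_cast at h1
    linarith

end Obstruction

/-! ### Perfect elimination and running intersections -/

section Decomposition

/-- Dirac's theorem for the graph of pairs that are faces: an unobstructed family is either a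
simplex on `W` or has two nonadjacent vertices in `W` whose neighbourhoods in `W` are faces. -/
theorem exists_simplicial_pair {𝓕 : Finset (Finset V)} (hN : NoObstruction 𝓕)
    (hne : 𝓕.Nonempty) (W : Finset V) (hW : ∀ u ∈ W, {u} ∈ faces 𝓕) :
    W ∈ faces 𝓕 ∨ ∃ u ∈ W, ∃ v ∈ W, {u, v} ∉ faces 𝓕 ∧
      W.filter (fun w => {u, w} ∈ faces 𝓕) ∈ faces 𝓕 ∧
      W.filter (fun w => {v, w} ∈ faces 𝓕) ∈ faces 𝓕 := by
  classical
  induction W using Finset.strongInduction with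
  | H W ih =>
    by_cases hWf : W ∈ faces 𝓕
    · exact Or.inl hWf
    right
    obtain ⟨a, ha, b, hb, hab⟩ : ∃ a ∈ W, ∃ b ∈ W, {a, b} ∉ faces 𝓕 := by
      by_contra hcon
      push Not at hcon
      exact hWf (conformal hN hne W hcon)
    let C := W.filter (fun u => {a, u} ∉ faces 𝓕)
    -- The component of `b` among the vertices not adjacent to `a`, and its boundary in `W`.
    let B := C.filter (fun u => Relation.ReflTransGen
      (fun u v => u ∈ C ∧ v ∈ C ∧ {u, v} ∈ faces 𝓕) b u)
    let S := (W \ B).filter (fun s => ∃ u ∈ B, {u, s} ∈ faces 𝓕)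
    have hbC : b ∈ C := Finset.mem_filter.mpr ⟨hb, hab⟩
    have hbB : b ∈ B := Finset.mem_filter.mpr ⟨hbC, Relation.ReflTransGen.refl⟩
    have hBW : ∀ u ∈ B, u ∈ W := fun u hu =>
      (Finset.mem_filter.mp (Finset.mem_filter.mp hu).1).1
    have haB : ∀ u ∈ B, {a, u} ∉ faces 𝓕 := fun u hu =>
      (Finset.mem_filter.mp (Finset.mem_filter.mp hu).1).2
    have hconn : ∀ u ∈ B,
        Relation.ReflTransGen (fun u v => u ∈ B ∧ v ∈ B ∧ {u, v} ∈ faces 𝓕) b u := by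
      intro u hu
      have hu' := (Finset.mem_filter.mp hu).2
      clear hu
      induction hu' with
      | refl => exact Relation.ReflTransGen.refl
      | tail h1 h2 ih' =>
        exact ih'.tail ⟨Finset.mem_filter.mpr ⟨h2.1, h1⟩,
          Finset.mem_filter.mpr ⟨h2.2.1, h1.tail h2⟩, h2.2.2⟩
    have hclosed : ∀ u ∈ B, ∀ s ∈ C, {u, s} ∈ faces 𝓕 → s ∈ B := fun u hu s hs h =>
      Finset.mem_filter.mpr ⟨hs, (Finset.mem_filter.mp hu).2.tail
        ⟨(Finset.mem_filter.mp hu).1, hs, h⟩⟩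
    have hS : ∀ s ∈ S, s ∈ W ∧ s ∉ B ∧ ∃ u ∈ B, {u, s} ∈ faces 𝓕 := fun s hs => by
      have := Finset.mem_filter.mp hs
      exact ⟨(Finset.mem_sdiff.mp this.1).1, (Finset.mem_sdiff.mp this.1).2, this.2⟩
    have hS' : ∀ s ∈ W, s ∉ B → ∀ u ∈ B, {u, s} ∈ faces 𝓕 → s ∈ S := fun s hs hsB u hu h =>
      Finset.mem_filter.mpr ⟨Finset.mem_sdiff.mpr ⟨hs, hsB⟩, u, hu, h⟩
    have haS : ∀ s ∈ S, {a, s} ∈ faces 𝓕 := by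
      intro s hs
      obtain ⟨h1, h2, u, hu, h3⟩ := hS s hs
      by_contra hcon
      exact h2 (hclosed u hu s (Finset.mem_filter.mpr ⟨h1, hcon⟩) h3)
    have haa : {a, a} ∈ faces 𝓕 := by simpa using hW a ha
    have ha_B : a ∉ B := fun h => haB a h haa
    have ha_S : a ∉ S := fun h => by
      obtain ⟨-, -, u, hu, h3⟩ := hS a h
      exact haB u hu (by rwa [Finset.pair_comm])
    have hclique : ∀ x ∈ S, ∀ y ∈ S, {x, y} ∈ faces 𝓕 := by
      intro x hx y hy
      by_contra hxy
      obtain ⟨-, -, b1, hb1, hb1x⟩ := hS x hx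
      obtain ⟨-, hyB, b2, hb2, hb2y⟩ := hS y hy
      exact no_cycle hN hconn hyB (haS x hx) (haS y hy) (fun h => ha_S (h ▸ hy)) hxy haB
        hb1 hb1x hb2 hb2y
    have hBS : B ∪ S ⊆ W := Finset.union_subset hBW fun s hs => (hS s hs).1
    have h1 : B ∪ S ⊂ W := by
      refine (Finset.ssubset_iff_of_subset hBS).mpr ⟨a, ha, ?_⟩
      simp [ha_B, ha_S]
    have h2 : W \ B ⊂ W := by
      refine (Finset.ssubset_iff_of_subset Finset.sdiff_subset).mpr ⟨b, hb, ?_⟩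
      simp [hbB]
    have hn1 : ∀ u ∈ B, W.filter (fun w => {u, w} ∈ faces 𝓕)
        ⊆ (B ∪ S).filter (fun w => {u, w} ∈ faces 𝓕) := by
      intro u hu w hw
      obtain ⟨hwW, hwu⟩ := Finset.mem_filter.mp hw
      refine Finset.mem_filter.mpr ⟨Finset.mem_union.mpr ?_, hwu⟩
      by_cases hwB : w ∈ B
      · exact Or.inl hwB
      · exact Or.inr (hS' w hwW hwB u hu hwu)
    have hn2 : ∀ v ∈ W, v ∉ B → v ∉ S → W.filter (fun w => {v, w} ∈ faces 𝓕)
        ⊆ (W \ B).filter (fun w => {v, w} ∈ faces 𝓕) := by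
      intro v hv hvB hvS w hw
      obtain ⟨hwW, hwv⟩ := Finset.mem_filter.mp hw
      refine Finset.mem_filter.mpr ⟨Finset.mem_sdiff.mpr ⟨hwW, fun hwB => hvS ?_⟩, hwv⟩
      exact hS' v hv hvB w hwB (by rwa [Finset.pair_comm])
    have hu : ∃ u ∈ B, W.filter (fun w => {u, w} ∈ faces 𝓕) ∈ faces 𝓕 := by
      rcases ih _ h1 (fun u hu => hW u (hBS hu)) with h | ⟨u, hu, v, hv, huv, h3, h4⟩
      · exact ⟨b, hbB, faces_mono h ((hn1 b hbB).trans (Finset.filter_subset _ _))⟩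
      · by_cases huB : u ∈ B
        · exact ⟨u, huB, faces_mono h3 (hn1 u huB)⟩
        by_cases hvB : v ∈ B
        · exact ⟨v, hvB, faces_mono h4 (hn1 v hvB)⟩
        exact absurd (hclique u ((Finset.mem_union.mp hu).resolve_left huB) v
          ((Finset.mem_union.mp hv).resolve_left hvB)) huv
    have hv : ∃ v ∈ W, v ∉ B ∧ v ∉ S ∧ W.filter (fun w => {v, w} ∈ faces 𝓕) ∈ faces 𝓕 := by
      rcases ih _ h2 (fun u hu => hW u (Finset.sdiff_subset hu)) with
        h | ⟨u, hu, v, hv, huv, h3, h4⟩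
      · exact ⟨a, ha, ha_B, ha_S,
          faces_mono h ((hn2 a ha ha_B ha_S).trans (Finset.filter_subset _ _))⟩
      · obtain ⟨huW, huB⟩ := Finset.mem_sdiff.mp hu
        obtain ⟨hvW, hvB⟩ := Finset.mem_sdiff.mp hv
        by_cases huS : u ∈ S
        · by_cases hvS : v ∈ S
          · exact absurd (hclique u huS v hvS) huv
          · exact ⟨v, hvW, hvB, hvS, faces_mono h4 (hn2 v hvW hvB hvS)⟩
        · exact ⟨u, huW, huB, huS, faces_mono h3 (hn2 u huW huB huS)⟩
    obtain ⟨u, huB, hu⟩ := hu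
    obtain ⟨v, hvW, hvB, hvS, hv⟩ := hv
    exact ⟨u, hBW u huB, v, hvW, fun h => hvS (hS' v hvW hvB u huB h), hu, hv⟩

/-- The inclusion-maximal faces contained in `W`. -/
def IsMaxFace (𝓕 : Finset (Finset V)) (W A : Finset V) : Prop :=
  A ∈ faces 𝓕 ∧ A ⊆ W ∧ ∀ T ∈ faces 𝓕, T ⊆ W → A ⊆ T → A = T

theorem exists_isMaxFace {𝓕 : Finset (Finset V)} {W T : Finset V} (hT : T ∈ faces 𝓕)
    (hTW : T ⊆ W) : ∃ A, IsMaxFace 𝓕 W A ∧ T ⊆ A := by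
  obtain ⟨A, hTA, hA⟩ := Finset.exists_le_maximal ((faces 𝓕).filter (· ⊆ W))
    (Finset.mem_filter.mpr ⟨hT, hTW⟩)
  have hA1 := Finset.mem_filter.mp hA.prop
  exact ⟨A, ⟨hA1.1, hA1.2, fun T' hT' hW' hAT =>
    hAT.antisymm (hA.le_of_ge (Finset.mem_filter.mpr ⟨hT', hW'⟩) hAT)⟩, hTA⟩

/-- Removing simplicial vertices one at a time orders the maximal faces of an unobstructed family
so that they have the running intersection property. -/
theorem exists_running_intersection {𝓕 : Finset (Finset V)} (hN : NoObstruction 𝓕)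
    (hne : 𝓕.Nonempty) (W : Finset V) (hW : ∀ u ∈ W, {u} ∈ faces 𝓕) :
    ∃ (l : ℕ) (H : ℕ → Finset V), (∀ g < l, ∀ h < l, H g = H h → g = h) ∧
      (∀ A, IsMaxFace 𝓕 W A ↔ ∃ h < l, H h = A) ∧ RunningIntersection l H := by
  classical
  have hempty : ∅ ∈ faces 𝓕 := by
    obtain ⟨K, hK⟩ := hne
    exact mem_faces.mpr ⟨K, hK, Finset.empty_subset _⟩
  induction hn : W.card generalizing W with
  | zero =>
    have hW0 : W = ∅ := Finset.card_eq_zero.mp hn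
    subst hW0
    refine ⟨1, fun _ => ∅, fun g hg h hh _ => by omega, fun A => ⟨fun h => ?_, ?_⟩,
      fun h hh h1 => by omega⟩
    · exact ⟨0, by omega, (Finset.subset_empty.mp h.2.1).symm⟩
    · rintro ⟨-, -, rfl⟩
      exact ⟨hempty, subset_rfl, fun T _ hT _ => (Finset.subset_empty.mp hT).symm⟩
  | succ n ih =>
    obtain ⟨v, hv, hK⟩ : ∃ v ∈ W, W.filter (fun w => ({v, w} : Finset V) ∈ faces 𝓕) ∈ faces 𝓕 := by
      rcases exists_simplicial_pair hN hne W hW with h | ⟨u, hu, -, -, -, h, -⟩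
      · obtain ⟨v, hv⟩ : W.Nonempty := Finset.card_pos.mp (by omega)
        exact ⟨v, hv, faces_mono h (Finset.filter_subset _ _)⟩
      · exact ⟨u, hu, h⟩
    set K := W.filter (fun w => ({v, w} : Finset V) ∈ faces 𝓕) with hKdef
    have hvK : v ∈ K := Finset.mem_filter.mpr ⟨hv, by simpa using hW v hv⟩
    have hKW : K ⊆ W := Finset.filter_subset _ _
    have hsub : ∀ T ∈ faces 𝓕, T ⊆ W → v ∈ T → T ⊆ K := fun T hT hTW hvT w hw =>
      Finset.mem_filter.mpr ⟨hTW hw, faces_mono hT (by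
        intro z hz
        rcases Finset.mem_insert.mp hz with h | h
        · exact h ▸ hvT
        · exact Finset.mem_singleton.mp h ▸ hw)⟩
    have hKmax : IsMaxFace 𝓕 W K := ⟨hK, hKW, fun T hT hTW hKT =>
      hKT.antisymm (hsub T hT hTW (hKT hvK))⟩
    have hKe : K.erase v ∈ faces 𝓕 := faces_mono hK (Finset.erase_subset _ _)
    have hKeW : K.erase v ⊆ W.erase v := Finset.erase_subset_erase _ hKW
    -- Maximal faces of `W` other than `K` are those of `W \ {v}` other than `K \ {v}`.
    have hiff : ∀ A, IsMaxFace 𝓕 W A ↔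
        A = K ∨ (IsMaxFace 𝓕 (W.erase v) A ∧ A ≠ K.erase v) := by
      intro A
      constructor
      · intro hA
        by_cases hAK : A = K
        · exact Or.inl hAK
        right
        have hvA : v ∉ A := fun h => hAK (hA.2.2 K hK hKW (hsub A hA.1 hA.2.1 h))
        refine ⟨⟨hA.1, fun w hw => Finset.mem_erase.mpr ⟨fun h => hvA (h ▸ hw), hA.2.1 hw⟩,
          fun T hT hTW => hA.2.2 T hT (hTW.trans (Finset.erase_subset _ _))⟩, fun h => ?_⟩
        exact hAK (hA.2.2 K hK hKW (h ▸ Finset.erase_subset _ _))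
      · rintro (rfl | ⟨hA, hAK⟩)
        · exact hKmax
        · refine ⟨hA.1, hA.2.1.trans (Finset.erase_subset _ _), fun T hT hTW hAT => ?_⟩
          by_cases hvT : v ∈ T
          · exfalso
            refine hAK (hA.2.2 _ hKe hKeW fun w hw => ?_)
            exact Finset.mem_erase.mpr ⟨(Finset.mem_erase.mp (hA.2.1 hw)).1,
              hsub T hT hTW hvT (hAT hw)⟩
          · exact hA.2.2 T hT (fun w hw => Finset.mem_erase.mpr ⟨fun h => hvT (h ▸ hw), hTW hw⟩)
              hAT
    obtain ⟨l, H, hinj, hH, hR⟩ := ih (W.erase v)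
      (fun u hu => hW u (Finset.erase_subset _ _ hu)) (by rw [Finset.card_erase_of_mem hv, hn]; rfl)
    have hvH : ∀ h < l, v ∉ H h := fun h hh hvh =>
      (Finset.mem_erase.mp (((hH _).mpr ⟨h, hh, rfl⟩).2.1 hvh)).1 rfl
    have hHK : ∀ h < l, H h ≠ K := fun h hh he => hvH h hh (he ▸ hvK)
    have hinter : ∀ h < l, H h ∩ K = H h ∩ K.erase v := fun h hh => by
      ext w
      simp only [Finset.mem_inter, Finset.mem_erase]
      exact ⟨fun ⟨h1, h2⟩ => ⟨h1, fun h3 => hvH h hh (h3 ▸ h1), h2⟩, fun ⟨h1, _, h2⟩ => ⟨h1, h2⟩⟩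
    by_cases hKm : IsMaxFace 𝓕 (W.erase v) (K.erase v)
    · obtain ⟨m, hm, hmK⟩ := (hH _).mp hKm
      refine ⟨l, Function.update H m K, ?_, ?_, ?_⟩
      · intro g hg h hh he
        by_cases h1 : g = m <;> by_cases h2 : h = m
        · rw [h1, h2]
        · subst h1
          rw [Function.update_self, Function.update_of_ne h2] at he
          exact absurd he.symm (hHK h hh)
        · subst h2
          rw [Function.update_self, Function.update_of_ne h1] at he
          exact absurd he (hHK g hg)
        · rw [Function.update_of_ne h1, Function.update_of_ne h2] at he
          exact hinj g hg h hh he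
      · intro A
        rw [hiff, hH]
        constructor
        · rintro (rfl | ⟨⟨h, hh, rfl⟩, hA⟩)
          · exact ⟨m, hm, Function.update_self _ _ _⟩
          · exact ⟨h, hh, Function.update_of_ne (fun h' : h = m => hA (by rw [h', hmK])) _ _⟩
        · rintro ⟨h, hh, rfl⟩
          by_cases h1 : h = m
          · subst h1
            exact Or.inl (Function.update_self _ _ _)
          · rw [Function.update_of_ne h1]
            exact Or.inr ⟨⟨h, hh, rfl⟩, fun h' => h1 (hinj h hh m hm (h'.trans hmK.symm))⟩
      · intro h hh h1
        obtain ⟨g, hg, hgH⟩ := hR h hh h1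
        have hsubup : ∀ i, i < l → H i ⊆ Function.update H m K i := fun i hi => by
          by_cases h1 : i = m
          · subst h1
            rw [Function.update_self, hmK]
            exact Finset.erase_subset _ _
          · rw [Function.update_of_ne h1]
        refine ⟨g, hg, fun g' hg' => ?_⟩
        refine Finset.Subset.trans ?_ ((hgH g' hg').trans (hsubup g (hg.trans hh)))
        by_cases h2 : h = m
        · subst h2
          rw [Function.update_self, Function.update_of_ne hg'.ne, hinter g' (hg'.trans hh), hmK]
        · rw [Function.update_of_ne h2]
          by_cases h3 : g' = m
          · subst h3
            rw [Function.update_self, Finset.inter_comm, hinter h hh, Finset.inter_comm, hmK]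
          · rw [Function.update_of_ne h3]
    · obtain ⟨A0, hA0, hKA0⟩ := exists_isMaxFace hKe hKeW
      obtain ⟨m, hm, rfl⟩ := (hH _).mp hA0
      refine ⟨l + 1, Function.update H l K, ?_, ?_, ?_⟩
      · intro g hg h hh he
        by_cases h1 : g = l <;> by_cases h2 : h = l
        · rw [h1, h2]
        · subst h1
          rw [Function.update_self, Function.update_of_ne h2] at he
          exact absurd he.symm (hHK h (by omega))
        · subst h2
          rw [Function.update_self, Function.update_of_ne h1] at he
          exact absurd he (hHK g (by omega))
        · rw [Function.update_of_ne h1, Function.update_of_ne h2] at he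
          exact hinj g (by omega) h (by omega) he
      · intro A
        rw [hiff]
        constructor
        · rintro (rfl | ⟨hA, -⟩)
          · exact ⟨l, by omega, Function.update_self _ _ _⟩
          · obtain ⟨h, hh, rfl⟩ := (hH _).mp hA
            exact ⟨h, by omega, Function.update_of_ne hh.ne _ _⟩
        · rintro ⟨h, hh, rfl⟩
          by_cases h1 : h = l
          · subst h1
            exact Or.inl (Function.update_self _ _ _)
          · rw [Function.update_of_ne h1]
            have h3 : IsMaxFace 𝓕 (W.erase v) (H h) := (hH _).mpr ⟨h, by omega, rfl⟩
            exact Or.inr ⟨h3, fun h' => hKm (h' ▸ h3)⟩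
      · intro h hh h1
        by_cases h2 : h = l
        · subst h2
          refine ⟨m, hm, fun g' hg' => ?_⟩
          rw [Function.update_self, Function.update_of_ne hg'.ne, Function.update_of_ne hm.ne,
            hinter g' hg']
          exact Finset.inter_subset_right.trans hKA0
        · have hhl : h < l := by omega
          obtain ⟨g, hg, hgH⟩ := hR h hhl h1
          refine ⟨g, hg, fun g' hg' => ?_⟩
          rw [Function.update_of_ne h2, Function.update_of_ne (hg'.trans hhl).ne,
            Function.update_of_ne (hg.trans hhl).ne]
          exact (hgH g' hg')

/-- The family of the marginals up to index `j`. -/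
def upToFamily {k : ℕ} (M : Fin (k + 1) → Finset V) (j : Fin (k + 1)) : Finset (Finset V) :=
  (Finset.univ.filter (fun i => i ≤ j)).image M

theorem mem_upToFamily {k : ℕ} {M : Fin (k + 1) → Finset V} {j : Fin (k + 1)} {A : Finset V} :
    A ∈ upToFamily M j ↔ ∃ i ≤ j, M i = A := by
  simp [upToFamily]

theorem mem_maxMarginals {k : ℕ} {M : Fin (k + 1) → Finset V} {j : Fin (k + 1)} {A : Finset V} :
    A ∈ maxMarginals M j ↔ A ∈ upToFamily M j ∧ ∀ B ∈ upToFamily M j, A ⊆ B → A = B := by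
  rw [maxMarginals, Finset.mem_filter]
  rfl

theorem isMaxFace_upToFamily {k : ℕ} {M : Fin (k + 1) → Finset V} {j : Fin (k + 1)}
    {A : Finset V} :
    IsMaxFace (upToFamily M j) ((upToFamily M j).biUnion id) A ↔ A ∈ maxMarginals M j := by
  have hsub : ∀ T ∈ faces (upToFamily M j), T ⊆ (upToFamily M j).biUnion id := by
    intro T hT
    obtain ⟨K, hK, hTK⟩ := mem_faces.mp hT
    exact hTK.trans (Finset.subset_biUnion_of_mem id hK)
  have hself : ∀ K ∈ upToFamily M j, K ∈ faces (upToFamily M j) := fun K hK =>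
    mem_faces.mpr ⟨K, hK, subset_rfl⟩
  rw [mem_maxMarginals]
  constructor
  · rintro ⟨h1, -, h3⟩
    obtain ⟨K, hK, hAK⟩ := mem_faces.mp h1
    have hAK' := h3 K (hself K hK) (hsub K (hself K hK)) hAK
    exact ⟨hAK' ▸ hK, fun B hB hAB => h3 B (hself B hB) (hsub B (hself B hB)) hAB⟩
  · rintro ⟨h1, h2⟩
    refine ⟨hself A h1, hsub A (hself A h1), fun T hT _ hAT => ?_⟩
    obtain ⟨K, hK, hTK⟩ := mem_faces.mp hT
    exact hAT.antisymm ((h2 K hK (hAT.trans hTK)).symm ▸ hTK)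

theorem exists_listing_of_noObstruction {k : ℕ} (M : Fin (k + 1) → Finset V) (j : Fin (k + 1))
    (hN : NoObstruction (upToFamily M j)) :
    ∃ (l : ℕ) (H : Fin l → Finset V), Function.Injective H ∧
      (∀ A : Finset V, A ∈ maxMarginals M j ↔ ∃ h : Fin l, H h = A) ∧
      ∀ h : Fin l, 2 ≤ h.1 → ∃ g : Fin l, g < h ∧
        ((Finset.univ.filter (fun g' => g' < h)).biUnion H) ∩ H h = H g ∩ H h := by
  obtain ⟨l, H, hinj, hH, hR⟩ := exists_running_intersection hN
    ⟨M j, mem_upToFamily.mpr ⟨j, le_rfl, rfl⟩⟩ ((upToFamily M j).biUnion id) (fun u hu => by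
      obtain ⟨K, hK, huK⟩ := Finset.mem_biUnion.mp hu
      exact mem_faces.mpr ⟨K, hK, Finset.singleton_subset_iff.mpr huK⟩)
  refine ⟨l, fun h => H h.1, fun g h he => Fin.ext (hinj g g.2 h h.2 he), fun A => ?_, ?_⟩
  · rw [← isMaxFace_upToFamily, hH]
    exact ⟨fun ⟨h, hh, he⟩ => ⟨⟨h, hh⟩, he⟩, fun ⟨h, he⟩ => ⟨h.1, h.2, he⟩⟩
  · intro h h2
    obtain ⟨g, hg, hgH⟩ := hR h.1 h.2 (by omega)
    refine ⟨⟨g, hg.trans h.2⟩, hg, ?_⟩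
    ext w
    simp only [Finset.mem_inter, Finset.mem_biUnion, Finset.mem_filter, Finset.mem_univ, true_and]
    constructor
    · rintro ⟨⟨g', hg', hw⟩, hwh⟩
      exact ⟨hgH g'.1 hg' (Finset.mem_inter.mpr ⟨hw, hwh⟩), hwh⟩
    · rintro ⟨hw, hwh⟩
      exact ⟨⟨⟨g, hg.trans h.2⟩, hg, hw⟩, hwh⟩

/-- Ordered decomposability provides running intersection listings for all prefixes; prefixes of
length at most two need no hypothesis. -/
theorem exists_running_of_orderedDecomposable {k : ℕ} {M : Fin (k + 1) → Finset V}
    (hM : OrderedDecomposable M) (j : Fin (k + 1)) :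
    ∃ (l : ℕ) (H : ℕ → Finset V), (∀ A, A ∈ maxMarginals M j ↔ ∃ h < l, H h = A) ∧
      RunningIntersection l H := by
  by_cases hj : 2 ≤ j.1
  · rcases hM with hk | hM
    · have := j.2
      omega
    obtain ⟨l, H, -, hH, hR⟩ := hM j hj
    refine ⟨l, fun n => if h : n < l then H ⟨n, h⟩ else ∅, fun A => ?_, ?_⟩
    · rw [hH]
      constructor
      · rintro ⟨h, he⟩
        exact ⟨h.1, h.2, by simpa using he⟩
      · rintro ⟨h, hh, he⟩
        exact ⟨⟨h, hh⟩, by simpa [hh] using he⟩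
    · intro h hh h1
      by_cases h2 : 2 ≤ h
      · rcases hR with hl | hR
        · omega
        obtain ⟨g, hg, he⟩ := hR ⟨h, hh⟩ h2
        refine ⟨g.1, hg, fun g' hg' w hw => ?_⟩
        have hg'l : g' < l := hg'.trans hh
        simp only [hg'l, hh, dif_pos, Finset.mem_inter] at hw
        have hw' : w ∈ H g ∩ H ⟨h, hh⟩ := by
          rw [← he]
          exact Finset.mem_inter.mpr ⟨Finset.mem_biUnion.mpr ⟨⟨g', hg'l⟩,
            Finset.mem_filter.mpr ⟨Finset.mem_univ _, hg'⟩, hw.1⟩, hw.2⟩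
        simpa using (Finset.mem_inter.mp hw').1
      · refine ⟨0, by omega, fun g' hg' => ?_⟩
        obtain rfl : g' = 0 := by omega
        exact Finset.inter_subset_left
  · have hcard : (maxMarginals M j).card ≤ 2 := by
      calc (maxMarginals M j).card
          ≤ ((Finset.univ.filter (fun i => i ≤ j)).image M).card :=
            Finset.card_le_card (Finset.filter_subset _ _)
        _ ≤ (Finset.univ.filter (fun i => i ≤ j)).card := Finset.card_image_le
        _ = (Finset.Iic j).card := by congr 1; ext; simp
        _ ≤ 2 := by rw [Fin.card_Iic]; omega
    let e := (maxMarginals M j).equivFin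
    refine ⟨(maxMarginals M j).card,
      fun n => if h : n < (maxMarginals M j).card then (e.symm ⟨n, h⟩).1 else ∅, fun A => ?_, ?_⟩
    · constructor
      · intro hA
        exact ⟨(e ⟨A, hA⟩).1, (e ⟨A, hA⟩).2, by simp⟩
      · rintro ⟨h, hh, rfl⟩
        simp [hh]
    · intro h hh h1
      refine ⟨0, by omega, fun g' hg' => ?_⟩
      obtain rfl : g' = 0 := by omega
      exact Finset.inter_subset_left

end Decomposition

/-! ### Variation independence excludes obstructions -/

section Necessity

variable {X : V → Type} [∀ v, Fintype (X v)] [∀ v, DecidableEq (X v)] [∀ v, Nonempty (X v)]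

theorem sum_eq_of_avg_eq {E : Finset V} {P Q : (∀ v, X v) → ℝ} (h : avg X E P = avg X E Q) :
    ∑ x, P x = ∑ x, Q x := by
  rw [← sum_avg E P, h, sum_avg]

theorem isPure_zero (E : Finset V) : IsPure X E 0 := fun G => by simp

/-- Every real number is a value of each single non-redundant component. -/
theorem exists_component_eq (one : ∀ v, X v) {M E : Finset V} (hEM : E ⊆ M) (hE : E.Nonempty)
    (e : Cell X E) (he : ∀ w, e w ≠ one w.1) (r : ℝ) :
    ∃ P : (∀ v, X v) → ℝ, (∀ v, 0 < P v) ∧ (∑ v, P v = 1) ∧ mllp X P M E e = r := by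
  obtain ⟨g0, hg0, hr⟩ := exists_pure E one (fun _ => r) (fun _ _ => rfl)
  have hg : ∀ F, IsPure X F (if F = E then g0 else 0) := fun F => by
    by_cases hF : F = E
    · subst hF
      simpa using hg0
    · simpa [hF] using isPure_zero F
  obtain ⟨P, hP, -, hI, hinter⟩ := mixed_exists (M := M) ({∅} : Finset (Finset V))
    (by simp) (by
      intro F hF F' hF'
      rw [Finset.mem_singleton] at hF ⊢
      subst hF
      exact Finset.subset_empty.mp hF')
    (R := fun _ => (Fintype.card (∀ v, X v) : ℝ)⁻¹)
    (fun _ => inv_pos.mpr (by exact_mod_cast Fintype.card_pos)) hg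
  refine ⟨P, hP, ?_, ?_⟩
  · rw [sum_eq_of_avg_eq (hI ∅ (by simp))]
    simp [card_omega_ne (X := X), -Fintype.card_pi]
  · obtain ⟨x, rfl⟩ := restr_surjective E e
    rw [mllp_eq_interaction hEM hE (avg_pos M hP), hinter E hEM (by simpa using hE.ne_empty),
      if_pos rfl]
    exact hr x fun v hv => he ⟨v, hv⟩

theorem isPure_interaction (E : Finset V) (φ : (∀ v, X v) → ℝ) :
    IsPure X E (interaction X E φ) := fun G => avg_interaction E G φ

/-- Equality of the parameters at the cells without baseline coordinates gives equality of the
whole interaction terms. -/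
theorem interaction_eq_of_mllp_eq (one : ∀ v, X v) {P Q : (∀ v, X v) → ℝ} {M E : Finset V}
    (hEM : E ⊆ M) (hE : E.Nonempty) (hP : ∀ x, 0 < avg X M P x) (hQ : ∀ x, 0 < avg X M Q x)
    (h : ∀ e : Cell X E, (∀ w, e w ≠ one w.1) → mllp X P M E e = mllp X Q M E e) :
    interaction X E (fun x => Real.log (avg X M P x))
      = interaction X E (fun x => Real.log (avg X M Q x)) := by
  rw [← sub_eq_zero, ← map_sub]
  refine pure_eq_zero (isPure_interaction E _) one fun x hx => ?_
  have := h (restr E x) fun w => hx w.1 w.2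
  rw [mllp_eq_interaction hEM hE hP, mllp_eq_interaction hEM hE hQ] at this
  rw [map_sub, Pi.sub_apply, this, sub_self]

/-- The components of the effects first contained in one of the marginals up to index `j`
determine these marginals. The table `Q` only needs positive marginals. -/
theorem avg_eq_of_components_eq (one : ∀ v, X v) {k : ℕ} {M : Fin (k + 1) → Finset V}
    {idx : Finset V → Fin (k + 1)}
    (hidx : ∀ E : Finset V, E ⊆ M (idx E) ∧ ∀ j : Fin (k + 1), j < idx E → ¬ E ⊆ M j)
    (j : Fin (k + 1)) {P Q : (∀ v, X v) → ℝ} (hsum : ∑ x, P x = ∑ x, Q x)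
    (hP : ∀ i ≤ j, ∀ x, 0 < avg X (M i) P x) (hQ : ∀ i ≤ j, ∀ x, 0 < avg X (M i) Q x)
    (h : ∀ (E : Finset V) (e : Cell X E), E.Nonempty → (∀ w, e w ≠ one w.1) →
      mllp X P (M (idx E)) E e = mllp X Q (M (idx E)) E e) :
    ∀ i ≤ j, avg X (M i) P = avg X (M i) Q := by
  intro i
  induction i using WellFoundedLT.induction with
  | ind i ih =>
    intro hij
    refine mixed_unique (M := M i) (fun E => E = ∅ ∨ idx E < i) (hP i hij) (hQ i hij)
      (avg_avg_of_subset subset_rfl _) (avg_avg_of_subset subset_rfl _) ?_ ?_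
    · rintro E hE hI
      rw [avg_avg_of_subset hE, avg_avg_of_subset hE]
      rcases hI with rfl | hlt
      · ext x
        rw [avg_empty, avg_empty, hsum]
      · rw [← avg_avg_of_subset (hidx E).1 P, ← avg_avg_of_subset (hidx E).1 Q,
          ih (idx E) hlt (hlt.le.trans hij)]
    · intro E hE hI
      rw [not_or, not_lt] at hI
      have hidxE : idx E = i := by
        refine le_antisymm ?_ hI.2
        by_contra hcon
        exact (hidx E).2 i (not_le.mp hcon) hE
      refine interaction_eq_of_mllp_eq one hE (Finset.nonempty_iff_ne_empty.mpr hI.1)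
        (hP i hij) (hQ i hij) fun e he => ?_
      have := h E e (Finset.nonempty_iff_ne_empty.mpr hI.1) he
      rwa [hidxE] at this

/-- Mixing with the uniform distribution makes the tables in an obstruction strictly positive. -/
theorem noObstruction_of_strict {𝓕 : Finset (Finset V)} (hne : 𝓕.Nonempty)
    (h : ∀ c d : Finset V → ℝ, c ∅ = 1 →
      (∀ K ∈ 𝓕, ∀ z, IsSign z → 0 < ∑ T ∈ K.powerset, c T * ∏ v ∈ T, z v) →
      (∀ z, IsSign z → 0 ≤ ∑ T ∈ faces 𝓕, d T * ∏ v ∈ T, z v) →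
      0 ≤ ∑ T ∈ faces 𝓕, d T * c T) : NoObstruction 𝓕 := by
  intro c d hc hK hd
  by_contra hcon
  push Not at hcon
  have hempty : ∅ ∈ faces 𝓕 := by
    obtain ⟨K, hK⟩ := hne
    exact mem_faces.mpr ⟨K, hK, Finset.empty_subset _⟩
  set s := ∑ T ∈ faces 𝓕, d T * c T with hs
  have hden : 0 < 2 * (|d ∅| - s) := by
    have := abs_nonneg (d ∅)
    linarith
  set δ := -s / (2 * (|d ∅| - s)) with hδ
  have hδ0 : 0 < δ := div_pos (by linarith) hden
  have hδ1 : δ < 1 := by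
    rw [hδ, div_lt_one hden]
    have := abs_nonneg (d ∅)
    linarith
  have hδ2 : δ * (2 * (|d ∅| - s)) = -s := div_mul_cancel₀ _ hden.ne'
  have := h (fun T => (1 - δ) * c T + if T = ∅ then δ else 0) d (by simp [hc]) (by
    intro K hKF z hz
    have h0 := hK K hKF z hz
    have h1 : ∑ T ∈ K.powerset, ((1 - δ) * c T + if T = ∅ then δ else 0) * ∏ v ∈ T, z v
        = (1 - δ) * (∑ T ∈ K.powerset, c T * ∏ v ∈ T, z v) + δ := by
      simp only [add_mul, Finset.sum_add_distrib, ite_mul, zero_mul, Finset.sum_ite_eq',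
        Finset.mul_sum, mul_assoc]
      simp
    rw [h1]
    have : 0 ≤ (1 - δ) * (∑ T ∈ K.powerset, c T * ∏ v ∈ T, z v) :=
      mul_nonneg (by linarith) h0
    linarith) hd
  have h1 : ∑ T ∈ faces 𝓕, d T * ((1 - δ) * c T + if T = ∅ then δ else 0)
      = (1 - δ) * s + δ * d ∅ := by
    simp only [mul_add, Finset.sum_add_distrib, mul_ite, mul_zero, Finset.sum_ite_eq', hempty,
      if_true, hs, Finset.mul_sum]
    rw [mul_comm δ]
    congr 1
    exact Finset.sum_congr rfl fun T _ => by ring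
  rw [h1] at this
  have h2 : δ * d ∅ ≤ δ * |d ∅| := mul_le_mul_of_nonneg_left (le_abs_self _) hδ0.le
  nlinarith

/-- The sign of a level: `1` at the baseline and `-1` elsewhere. -/
def levelSign (one : ∀ v, X v) (v : V) (s : X v) : ℝ := if s = one v then 1 else -1

/-- The product of the signs of the coordinates in `T`. -/
def signChar (one : ∀ v, X v) (T : Finset V) (x : ∀ v, X v) : ℝ :=
  ∏ v ∈ T, levelSign one v (x v)

/-- Weights of the levels under which the level signs have mean zero. -/
def levelWeight (one : ∀ v, X v) (v : V) (s : X v) : ℝ :=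
  if s = one v then (Fintype.card (X v) : ℝ) - 1 else 1

/-- The product of the level weights. -/
def cellWeight (one : ∀ v, X v) (x : ∀ v, X v) : ℝ := ∏ v, levelWeight one v (x v)

theorem levelSign_isSign (one x : ∀ v, X v) : IsSign fun v => levelSign one v (x v) := fun v => by
  by_cases h : x v = one v <;> simp [levelSign, h]

theorem sum_levelWeight_mul_levelSign (one : ∀ v, X v) (v : V) :
    ∑ s, levelWeight one v s * levelSign one v s = 0 := by
  have h : ∀ s, levelWeight one v s * levelSign one v s
      = (if s = one v then (Fintype.card (X v) : ℝ) else 0) - 1 := fun s => by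
    by_cases hs : s = one v <;> simp [levelWeight, levelSign, hs]
  simp [h, Finset.sum_sub_distrib]

theorem cellWeight_pos (hX : ∀ v, 2 ≤ Fintype.card (X v)) (one x : ∀ v, X v) :
    0 < cellWeight one x := Finset.prod_pos fun v _ => by
  have : (2 : ℝ) ≤ Fintype.card (X v) := by exact_mod_cast hX v
  rw [levelWeight]
  split_ifs <;> linarith

theorem avg_signChar (one : ∀ v, X v) {T G : Finset V} (h : T ⊆ G) :
    avg X G (signChar one T) = signChar one T :=
  avg_eq_self fun x y => Finset.prod_congr rfl fun v hv => by
    rw [Finset.piecewise_eq_of_mem _ _ _ (h hv)]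

theorem avg_signChar_mul_cellWeight (one : ∀ v, X v) (T G : Finset V) :
    avg X G (signChar one T * cellWeight one)
      = if T ⊆ G then signChar one T * avg X G (cellWeight one) else 0 := by
  split_ifs with h
  · exact avg_mul_left (avg_signChar one h) _
  · obtain ⟨v, hvT, hvG⟩ := Finset.not_subset.mp h
    refine avg_eq_zero hvG fun x => ?_
    have h1 : ∀ s, (signChar one T * cellWeight one) (Function.update x v s)
        = (levelWeight one v s * levelSign one v s) *
          ((∏ w ∈ T.erase v, levelSign one w (x w)) *
            ∏ w ∈ Finset.univ.erase v, levelWeight one w (x w)) := by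
      intro s
      rw [Pi.mul_apply, signChar, cellWeight, ← Finset.mul_prod_erase T _ hvT,
        ← Finset.mul_prod_erase Finset.univ _ (Finset.mem_univ v)]
      have h2 : ∀ S : Finset V, ∏ w ∈ S.erase v, levelSign one w (Function.update x v s w)
          = ∏ w ∈ S.erase v, levelSign one w (x w) := fun S =>
        Finset.prod_congr rfl fun w hw => by
          rw [Function.update_of_ne (Finset.ne_of_mem_erase hw)]
      have h3 : ∀ S : Finset V, ∏ w ∈ S.erase v, levelWeight one w (Function.update x v s w)
          = ∏ w ∈ S.erase v, levelWeight one w (x w) := fun S =>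
        Finset.prod_congr rfl fun w hw => by
          rw [Function.update_of_ne (Finset.ne_of_mem_erase hw)]
      rw [h2, h3, Function.update_self]
      ring
    simp only [h1]
    rw [← Finset.sum_mul, sum_levelWeight_mul_levelSign, zero_mul]

theorem signChar_mul_signChar (one : ∀ v, X v) (S T : Finset V) (x : ∀ v, X v) :
    signChar one S x * signChar one T x = signChar one (symmDiff S T) x := by
  have hsq : signChar one (S ∩ T) x * signChar one (S ∩ T) x = 1 := by
    rcases (levelSign_isSign one x).prod (S ∩ T) with h | h <;> rw [signChar, h] <;> norm_num
  have h1 : signChar one S x = signChar one (S ∩ T) x * signChar one (S \ T) x :=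
    (Finset.prod_inter_mul_prod_sdiff S T _).symm
  have h2 : signChar one T x = signChar one (S ∩ T) x * signChar one (T \ S) x := by
    rw [Finset.inter_comm]
    exact (Finset.prod_inter_mul_prod_sdiff T S _).symm
  have h3 : signChar one (symmDiff S T) x = signChar one (S \ T) x * signChar one (T \ S) x := by
    rw [symmDiff_def]
    exact Finset.prod_union disjoint_sdiff_sdiff
  rw [h1, h2, h3]
  linear_combination signChar one (S \ T) x * signChar one (T \ S) x * hsq

/-- The signed table whose level signs have the moments `c`. -/
noncomputable def momentTable (one : ∀ v, X v) (c : Finset V → ℝ) (x : ∀ v, X v) : ℝ :=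
  (∑ y, cellWeight one y)⁻¹ * ∑ T, c T * (signChar one T x * cellWeight one x)

theorem sum_cellWeight_pos (hX : ∀ v, 2 ≤ Fintype.card (X v)) (one : ∀ v, X v) :
    0 < ∑ y, cellWeight one y :=
  Finset.sum_pos (fun y _ => cellWeight_pos hX one y) Finset.univ_nonempty

theorem sum_momentTable_mul (hX : ∀ v, 2 ≤ Fintype.card (X v)) (one : ∀ v, X v)
    (c : Finset V → ℝ) (S : Finset V) :
    ∑ x, momentTable one c x * signChar one S x = c S := by
  have hZ := (sum_cellWeight_pos hX one).ne'
  have h1 : ∀ T, ∑ x, signChar one T x * cellWeight one x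
      = if T = ∅ then ∑ y, cellWeight one y else 0 := by
    intro T
    by_cases hT : T = ∅
    · simp [hT, signChar]
    · rw [if_neg hT]
      have h2 := avg_signChar_mul_cellWeight one T ∅
      rw [if_neg (by simpa using hT)] at h2
      have h3 := sum_avg ∅ (signChar one T * cellWeight one)
      rw [h2] at h3
      simpa using h3.symm
  have h2 : ∀ x, momentTable one c x * signChar one S x
      = (∑ y, cellWeight one y)⁻¹ *
        ∑ T, c T * (signChar one (symmDiff T S) x * cellWeight one x) := fun x => by
    rw [momentTable, mul_assoc, Finset.sum_mul]
    congr 1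
    exact Finset.sum_congr rfl fun T _ => by rw [← signChar_mul_signChar]; ring
  simp only [h2]
  rw [← Finset.mul_sum, Finset.sum_comm]
  simp only [← Finset.mul_sum, h1, symmDiff_eq_bot, ← Finset.bot_eq_empty, mul_ite, mul_zero,
    Finset.sum_ite_eq', Finset.mem_univ, if_true]
  field_simp

theorem avg_momentTable (one : ∀ v, X v) (c : Finset V → ℝ) (G : Finset V) (x : ∀ v, X v) :
    avg X G (momentTable one c) x = (∑ y, cellWeight one y)⁻¹ *
      (avg X G (cellWeight one) x * ∑ T ∈ G.powerset, c T * signChar one T x) := by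
  have h1 : momentTable one c = (∑ y, cellWeight one y)⁻¹ •
      ∑ T, c T • (signChar one T * cellWeight one) := by
    ext x
    simp [momentTable, Finset.sum_apply]
  have h2 : (Finset.univ.filter fun T => T ⊆ G) = G.powerset := by
    ext T
    simp
  rw [h1, map_smul, map_sum]
  simp only [map_smul, avg_signChar_mul_cellWeight, Pi.smul_apply, Finset.sum_apply, smul_eq_mul]
  rw [← h2, Finset.sum_filter]
  congr 1
  rw [Finset.mul_sum]
  refine Finset.sum_congr rfl fun T _ => ?_
  split_ifs
  · rw [Pi.mul_apply]
    ring
  · simp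

/-- Variation independence of the non-redundant components: values attainable one at a time are
attainable jointly. -/
def VariationIndependent (X : V → Type) [∀ v, Fintype (X v)] [∀ v, DecidableEq (X v)]
    (one : ∀ v, X v) {k : ℕ} (M : Fin (k + 1) → Finset V) (idx : Finset V → Fin (k + 1)) : Prop :=
  ∀ f : (E : Finset V) → Cell X E → ℝ,
    (∀ (E : Finset V) (e : Cell X E), E.Nonempty → (∀ w, e w ≠ one w.1) →
      ∃ P : (∀ v, X v) → ℝ, (∀ v, 0 < P v) ∧ (∑ v, P v = 1) ∧
        mllp X P (M (idx E)) E e = f E e) →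
    ∃ P : (∀ v, X v) → ℝ, (∀ v, 0 < P v) ∧ (∑ v, P v = 1) ∧
      ∀ (E : Finset V) (e : Cell X E), E.Nonempty → (∀ w, e w ≠ one w.1) →
        mllp X P (M (idx E)) E e = f E e

/-- An obstruction for the marginals up to index `j` is a signed table with positive marginals on
them that no distribution can share; its parameters are then not jointly attainable. -/
theorem noObstruction_of_variationIndependent (hX : ∀ v, 2 ≤ Fintype.card (X v))
    (one : ∀ v, X v) {k : ℕ} {M : Fin (k + 1) → Finset V} {idx : Finset V → Fin (k + 1)}
    (hidx : ∀ E : Finset V, E ⊆ M (idx E) ∧ ∀ j : Fin (k + 1), j < idx E → ¬ E ⊆ M j)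
    (hVI : VariationIndependent X one M idx) (j : Fin (k + 1)) :
    NoObstruction (upToFamily M j) := by
  refine noObstruction_of_strict ⟨M j, mem_upToFamily.mpr ⟨j, le_rfl, rfl⟩⟩ ?_
  intro c d hc hK hd
  set Q := momentTable one c with hQ
  obtain ⟨P, hP, hP1, hPQ⟩ := hVI (fun E e => mllp X Q (M (idx E)) E e)
    (fun E e hE he => exists_component_eq one (hidx E).1 hE e he _)
  have hQpos : ∀ i ≤ j, ∀ x, 0 < avg X (M i) Q x := by
    intro i hi x
    rw [hQ, avg_momentTable]
    refine mul_pos (inv_pos.mpr (sum_cellWeight_pos hX one))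
      (mul_pos (avg_pos _ (cellWeight_pos hX one) x) ?_)
    exact hK (M i) (mem_upToFamily.mpr ⟨i, hi, rfl⟩) _ (levelSign_isSign one x)
  have hQ1 : ∑ x, Q x = 1 := by
    have := sum_momentTable_mul hX one c ∅
    simpa [signChar, hc] using this
  have hM := avg_eq_of_components_eq one hidx j (hP1.trans hQ1.symm)
    (fun i _ => avg_pos (M i) hP) hQpos hPQ
  have hmom : ∀ T ∈ faces (upToFamily M j), ∑ x, P x * signChar one T x = c T := by
    intro T hT
    obtain ⟨K, hKF, hTK⟩ := mem_faces.mp hT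
    obtain ⟨i, hi, rfl⟩ := mem_upToFamily.mp hKF
    have h1 := avg_selfAdjoint (M i) P (signChar one T)
    have h2 := avg_selfAdjoint (M i) Q (signChar one T)
    rw [avg_signChar one hTK] at h1 h2
    rw [h1, hM i hi, ← h2, sum_momentTable_mul hX]
  calc (0 : ℝ) ≤ ∑ x, P x * ∑ T ∈ faces (upToFamily M j), d T * signChar one T x :=
        Finset.sum_nonneg fun x _ => mul_nonneg (hP x).le (hd _ (levelSign_isSign one x))
    _ = ∑ T ∈ faces (upToFamily M j), d T * ∑ x, P x * signChar one T x := by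
        simp only [Finset.mul_sum]
        rw [Finset.sum_comm]
        exact Finset.sum_congr rfl fun T _ => Finset.sum_congr rfl fun x _ => by ring
    _ = ∑ T ∈ faces (upToFamily M j), d T * c T :=
        Finset.sum_congr rfl fun T hT => by rw [hmom T hT]

end Necessity

/-! ### Ordered decomposability gives variation independence -/

section Sufficiency

variable {X : V → Type} [∀ v, Fintype (X v)] [∀ v, DecidableEq (X v)] [∀ v, Nonempty (X v)]

/-- The marginals of index less than `j` can be kept while the components of the effects first
contained in `M j` receive arbitrary values: choose the marginal on `M j` by the mixed
parameterization, then glue along a running intersection listing. -/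
theorem exists_extension (one : ∀ v, X v) {k : ℕ} {M : Fin (k + 1) → Finset V}
    (hnd : ∀ i j : Fin (k + 1), i < j → ¬ M j ⊆ M i) (hM : OrderedDecomposable M)
    (j : Fin (k + 1)) (f : (E : Finset V) → Cell X E → ℝ) {P' : (∀ v, X v) → ℝ}
    (hP' : ∀ x, 0 < P' x) :
    ∃ P : (∀ v, X v) → ℝ, (∀ x, 0 < P x) ∧ ∑ x, P x = ∑ x, P' x ∧
      (∀ i < j, avg X (M i) P = avg X (M i) P') ∧
      ∀ (E : Finset V) (e : Cell X E), E.Nonempty → E ⊆ M j → (∀ i < j, ¬ E ⊆ M i) →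
        (∀ w, e w ≠ one w.1) → mllp X P (M j) E e = f E e := by
  classical
  have hg : ∀ E : Finset V, ∃ g, IsPure X E g ∧
      ∀ x, (∀ v ∈ E, x v ≠ one v) → g x = f E (restr E x) := fun E =>
    exists_pure E one (fun x => f E (restr E x)) fun x y => by
      congr 1
      ext w
      exact Finset.piecewise_eq_of_mem _ _ _ w.2
  choose g hgp hgf using hg
  let I : Finset (Finset V) :=
    Finset.univ.filter fun E => E ⊆ M j ∧ (E = ∅ ∨ ∃ i < j, E ⊆ M i)
  have hI : ∀ E, E ∈ I ↔ E ⊆ M j ∧ (E = ∅ ∨ ∃ i < j, E ⊆ M i) := fun E => by simp [I]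
  obtain ⟨Q, hQ, -, hQI, hQg⟩ := mixed_exists (M := M j) I (fun E hE => ((hI E).mp hE).1)
    (fun E hE F hF => (hI F).mpr ⟨hF.trans ((hI E).mp hE).1, by
      rcases ((hI E).mp hE).2 with rfl | ⟨i, hi, hEi⟩
      · exact Or.inl (Finset.subset_empty.mp hF)
      · exact Or.inr ⟨i, hi, hF.trans hEi⟩⟩) hP' hgp
  obtain ⟨l, H, hH, hR⟩ := exists_running_of_orderedDecomposable hM j
  -- Members of the listing other than `M j` come from earlier marginals.
  have hearly : ∀ h < l, H h ≠ M j → ∃ i < j, M i = H h := by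
    intro h hh hne
    obtain ⟨i, hi, he⟩ := mem_upToFamily.mp (mem_maxMarginals.mp ((hH _).mpr ⟨h, hh, rfl⟩)).1
    exact ⟨i, lt_of_le_of_ne hi fun hij => hne (by rw [← he, hij]), he⟩
  have hcompat : ∀ h < l, H h ≠ M j → avg X (M j ∩ H h) Q = avg X (M j ∩ H h) P' := by
    intro h hh hne
    obtain ⟨i, hi, he⟩ := hearly h hh hne
    exact hQI _ ((hI _).mpr ⟨Finset.inter_subset_left,
      Or.inr ⟨i, hi, he ▸ Finset.inter_subset_right⟩⟩)
  obtain ⟨P, hP, hPH⟩ := glue_sequence (p := fun h => if H h = M j then Q else P') hR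
    (fun h x => by
      split_ifs
      · exact hQ x
      · exact hP' x)
    (fun g hg h hh => by
      by_cases h1 : H g = M j <;> by_cases h2 : H h = M j
      · simp [h1, h2]
      · simpa [h1, h2] using hcompat h hh h2
      · simpa [h1, h2, Finset.inter_comm] using (hcompat g hg h1).symm
      · simp [h1, h2])
  have hmj : avg X (M j) P = avg X (M j) Q := by
    have hmax : M j ∈ maxMarginals M j := by
      refine mem_maxMarginals.mpr ⟨mem_upToFamily.mpr ⟨j, le_rfl, rfl⟩, fun B hB hjB => ?_⟩
      obtain ⟨i, hi, rfl⟩ := mem_upToFamily.mp hB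
      rcases hi.lt_or_eq with hlt | rfl
      · exact absurd hjB (hnd i j hlt)
      · rfl
    obtain ⟨h, hh, he⟩ := (hH _).mp hmax
    have := hPH h hh
    rwa [if_pos he, he] at this
  refine ⟨P, hP, ?_, ?_, ?_⟩
  · rw [sum_eq_of_avg_eq hmj]
    exact sum_eq_of_avg_eq (hQI ∅ ((hI ∅).mpr ⟨Finset.empty_subset _, Or.inl rfl⟩))
  · intro i hi
    have hface : M i ∈ faces (upToFamily M j) :=
      mem_faces.mpr ⟨M i, mem_upToFamily.mpr ⟨i, hi.le, rfl⟩, subset_rfl⟩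
    obtain ⟨A, hA, hiA⟩ := exists_isMaxFace (W := (upToFamily M j).biUnion id) hface
      (Finset.subset_biUnion_of_mem id (mem_upToFamily.mpr ⟨i, hi.le, rfl⟩))
    obtain ⟨h, hh, rfl⟩ := (hH A).mp (isMaxFace_upToFamily.mp hA)
    rw [← avg_avg_of_subset hiA P, hPH h hh, avg_avg_of_subset hiA]
    split_ifs with he
    · exact hQI _ ((hI _).mpr ⟨he ▸ hiA, Or.inr ⟨i, hi, subset_rfl⟩⟩)
    · rfl
  · intro E e hE hEj hEi he
    obtain ⟨x, rfl⟩ := restr_surjective E e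
    rw [mllp_eq_interaction hEj hE (avg_pos _ hP), hmj, hQg E hEj]
    · exact hgf E x fun v hv => he ⟨v, hv⟩
    · rw [hI]
      rintro ⟨-, rfl | ⟨i, hi, hEi'⟩⟩
      · exact Finset.not_nonempty_empty hE
      · exact hEi i hi hEi'

theorem variationIndependent_of_orderedDecomposable (one : ∀ v, X v) {k : ℕ}
    {M : Fin (k + 1) → Finset V} (hnd : ∀ i j : Fin (k + 1), i < j → ¬ M j ⊆ M i)
    {idx : Finset V → Fin (k + 1)}
    (hidx : ∀ E : Finset V, E ⊆ M (idx E) ∧ ∀ j : Fin (k + 1), j < idx E → ¬ E ⊆ M j)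
    (hM : OrderedDecomposable M) : VariationIndependent X one M idx := by
  intro f _
  have key : ∀ n ≤ k + 1, ∃ P : (∀ v, X v) → ℝ, (∀ v, 0 < P v) ∧ (∑ v, P v = 1) ∧
      ∀ (E : Finset V) (e : Cell X E), E.Nonempty → (idx E).1 < n → (∀ w, e w ≠ one w.1) →
        mllp X P (M (idx E)) E e = f E e := by
    intro n
    induction n with
    | zero =>
      intro _
      refine ⟨fun _ => (Fintype.card (∀ v, X v) : ℝ)⁻¹,
        fun _ => inv_pos.mpr (by exact_mod_cast Fintype.card_pos), ?_,
        fun E e _ h => absurd h (Nat.not_lt_zero _)⟩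
      simp [card_omega_ne (X := X), -Fintype.card_pi]
    | succ n ih =>
      intro hn
      obtain ⟨P', hP', hsum, hf⟩ := ih (by omega)
      obtain ⟨P, hP, hPsum, hPi, hPj⟩ := exists_extension one hnd hM ⟨n, hn⟩ f hP'
      refine ⟨P, hP, hPsum.trans hsum, fun E e hE hlt he => ?_⟩
      rcases Nat.lt_succ_iff_lt_or_eq.mp hlt with h | h
      · rw [← hf E e hE h he]
        obtain ⟨x, rfl⟩ := restr_surjective E e
        rw [mllp_eq_interaction (hidx E).1 hE (avg_pos _ hP),
          mllp_eq_interaction (hidx E).1 hE (avg_pos _ hP'), hPi (idx E) h]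
      · have hj : idx E = ⟨n, hn⟩ := Fin.ext h
        rw [hj]
        exact hPj E e hE (hj ▸ (hidx E).1) (fun i hi => (hidx E).2 i (hj ▸ hi)) he
  obtain ⟨P, hP, hsum, hf⟩ := key (k + 1) le_rfl
  exact ⟨P, hP, hsum, fun E e hE he => hf E e hE (idx E).2 he⟩

end Sufficiency

/-- The non-redundant components of the hierarchical complete marginal
log-linear parameterization based on a non-decreasing complete sequence of marginals are
variation independent (any componentwise attainable assignment of values is jointly attainable
by a single strictly positive distribution) if and only if the sequence is ordered
decomposable. -/
theorem variation_independence_iff_ordered_decomposable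
    {V : Type} [Fintype V] [DecidableEq V]
    (X : V → Type) [∀ v, Fintype (X v)] [∀ v, DecidableEq (X v)]
    (hX : ∀ v, 2 ≤ Fintype.card (X v))
    (one : ∀ v, X v)
    (k : ℕ) (M : Fin (k + 1) → Finset V)
    (hnd : ∀ i j : Fin (k + 1), i < j → ¬ M j ⊆ M i)
    (hcomp : M (Fin.last k) = Finset.univ)
    (idx : Finset V → Fin (k + 1))
    (hidx : ∀ E : Finset V, E ⊆ M (idx E) ∧ ∀ j : Fin (k + 1), j < idx E → ¬ E ⊆ M j) :
    (∀ f : (E : Finset V) → Cell X E → ℝ,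
        (∀ (E : Finset V) (e : Cell X E), E.Nonempty → (∀ w, e w ≠ one w.1) →
          ∃ P : (∀ v, X v) → ℝ, (∀ v, 0 < P v) ∧ (∑ v, P v = 1) ∧
            mllp X P (M (idx E)) E e = f E e) →
        ∃ P : (∀ v, X v) → ℝ, (∀ v, 0 < P v) ∧ (∑ v, P v = 1) ∧
          ∀ (E : Finset V) (e : Cell X E), E.Nonempty → (∀ w, e w ≠ one w.1) →
            mllp X P (M (idx E)) E e = f E e) ↔
      OrderedDecomposable M := by
  have : ∀ v, Nonempty (X v) := fun v => ⟨one v⟩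
  constructor
  · intro hVI
    refine Or.inr fun j _ => ?_
    obtain ⟨l, H, hinj, hH, hR⟩ := exists_listing_of_noObstruction M j
      (noObstruction_of_variationIndependent hX one hidx hVI j)
    exact ⟨l, H, hinj, hH, Or.inr hR⟩
  · exact variationIndependent_of_orderedDecomposable one hnd hidx
end

section
/- Let all variables in 𝒱 be binary and let E ⊆ M ⊊ N ⊆ 𝒱 with E nonempty. If a strictly positive distribution P on ∏_{V∈𝒱} X_V satisfies, for some variable A ∈ E, the conditional independence (N ∖ M) ⫫ {A} | (M ∖ {A}), then λ^N_E(P) = λ^M_E(P). -/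
/-!
Write `p_S(v)` for the marginal probability `P_S(v|_S)` at a full cell `v`, and `h = log p_N - log p_M`.
Conditional independence says `p_N · p_{M∖A} = p_{N∖A} · p_M`, so `h = log p_{N∖A} - log p_{M∖A}` does
not depend on the coordinate `A` (`logRatio_update`).

The definition of `mllp` says that `∑_{F ⊆ E} λ^M_F` is the mean of `log p_M` over the full cells that
equal `1` on `E` (`sum_mllp`). Hence `D F = λ^N_F - λ^M_F` satisfies `∑_{F ⊆ E} D F = mean of h over the
cells equal to 1 on E`, and since `h` ignores `A`, this mean is the same for `E` and for `E ∖ {A}`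
(`condMean_erase`). Subtracting the two identities gives `∑_{A ∈ F ⊆ E} D F = 0`, and strong induction
on `E` yields `D E = 0`.
-/

open Finset

variable {V : Type} [Fintype V] [DecidableEq V]

/-- `P` satisfies the conditional independence `A ⫫ B | C`:
`P_{A∪B∪C}(a,b,c) · P_C(c) = P_{A∪C}(a,c) · P_{B∪C}(b,c)` for all cells. -/
def CondIndep {V : Type} [Fintype V] [DecidableEq V]
    (X : V → Type) [∀ v, Fintype (X v)] [∀ v, DecidableEq (X v)]
    (P : (∀ v, X v) → ℝ) (A B C : Finset V) : Prop :=
  ∀ m : Cell X (A ∪ B ∪ C),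
    marginal X P (A ∪ B ∪ C) m *
        marginal X P C (restrictCell Finset.subset_union_right m) =
      marginal X P (A ∪ C)
          (restrictCell (Finset.union_subset_union_left Finset.subset_union_left) m) *
        marginal X P (B ∪ C)
          (restrictCell (Finset.union_subset_union_left Finset.subset_union_right) m)

/-- The marginal probability over `S`, as a function of the full cell. -/
noncomputable def fullMarginal (P : (∀ _ : V, Fin 2) → ℝ) (S : Finset V) (v : V → Fin 2) : ℝ :=
  marginal (fun _ => Fin 2) P S (fun w => v w.1)

/-- The mean of `f` over the `2 ^ |V ∖ E|` full cells equal to `1` on `E`. -/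
noncomputable def condMean (f : (V → Fin 2) → ℝ) (E : Finset V) : ℝ :=
  ((2 : ℝ) ^ (Fintype.card V - E.card))⁻¹ * ∑ v : V → Fin 2, if ∀ w ∈ E, v w = 1 then f v else 0

theorem fullMarginal_pos (P : (∀ _ : V, Fin 2) → ℝ) (hP : ∀ v, 0 < P v) (S : Finset V)
    (v : V → Fin 2) : 0 < fullMarginal P S v := by
  unfold fullMarginal marginal
  refine Finset.sum_pos' (fun u _ => ?_) ⟨v, Finset.mem_univ _, ?_⟩
  · split_ifs
    · exact (hP u).le
    · exact le_rfl
  · simpa using hP v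

theorem fullMarginal_update (P : (∀ _ : V, Fin 2) → ℝ) {S : Finset V} {A : V} (hA : A ∉ S)
    (v : V → Fin 2) (x : Fin 2) :
    fullMarginal P S (Function.update v A x) = fullMarginal P S v := by
  unfold fullMarginal
  congr 1
  funext w
  have hw : w.1 ≠ A := fun h => hA (h ▸ w.2)
  exact Function.update_of_ne hw _ _

/-- Summing over full cells a function of the `M`-cell counts each `M`-cell `2 ^ |V ∖ M|` times. -/
theorem sum_full_eq (M : Finset V) (g : Cell (fun _ : V => Fin 2) M → ℝ) :
    ∑ v : V → Fin 2, g (fun w => v w.1) = 2 ^ (Fintype.card V - M.card) * ∑ m, g m := by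
  rw [← (Equiv.piEquivPiSubtypeProd (fun x => x ∈ M) (fun _ : V => Fin 2)).symm.sum_comp,
    Fintype.sum_prod_type]
  have key : ∀ (m : Cell (fun _ : V => Fin 2) M) (y : {x // x ∉ M} → Fin 2),
      g (fun w => (Equiv.piEquivPiSubtypeProd (fun x => x ∈ M) (fun _ : V => Fin 2)).symm
        (m, y) w.1) = g m := by
    intro m y
    congr 1
    funext w
    simp [Equiv.piEquivPiSubtypeProd, w.2]
  rw [Finset.mul_sum]
  refine Finset.sum_congr rfl fun m _ => ?_
  rw [Finset.sum_congr rfl fun y _ => key m y]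
  simp [Fintype.card_subtype_compl]

/-- The recursion defining `mllp`, with the mean taken over full cells. -/
theorem sum_mllp (P : (∀ _ : V, Fin 2) → ℝ) {M E : Finset V} (hEM : E ⊆ M) :
    ∑ F ∈ E.powerset, mllp (fun _ => Fin 2) P M F (fun _ => 1) =
      condMean (fun v => Real.log (fullMarginal P M v)) E := by
  rw [← Finset.add_sum_erase _ _ (Finset.mem_powerset_self E), mllp,
    Finset.sum_attach (E.powerset.erase E)
      (fun F => mllp (fun _ => Fin 2) P M F (fun _ => 1)), sub_add_cancel]
  have h := sum_full_eq M (fun m => if ∀ (w : V) (_ : w ∈ E) (hM : w ∈ M), m ⟨w, hM⟩ = 1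
       then Real.log (marginal (fun _ => Fin 2) P M m) else 0)
  have h' : ∑ v : V → Fin 2, (if ∀ w ∈ E, v w = 1 then Real.log (fullMarginal P M v) else 0) =
      ∑ v : V → Fin 2, (if ∀ (w : V) (_ : w ∈ E) (_ : w ∈ M), v w = 1
       then Real.log (marginal (fun _ => Fin 2) P M (fun w => v w.1)) else 0) := by
    refine Finset.sum_congr rfl fun v _ => ?_
    refine if_congr ⟨fun h w hw _ => h w hw, fun h w hw => h w hw (hEM hw)⟩ rfl rfl
  unfold condMean
  rw [h', h, ← mul_assoc]
  congr 1
  have h1 := Finset.card_le_card hEM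
  have h2 := Finset.card_le_univ M
  have h3 : Fintype.card V - E.card = (Fintype.card V - M.card) + (M.card - E.card) := by omega
  have h4 : Fintype.card (Cell (fun _ : V => Fin 2) (M \ E)) = 2 ^ (M.card - E.card) := by
    rw [Fintype.card_fun, Fintype.card_fin, Fintype.card_coe, Finset.card_sdiff_of_subset hEM]
  rw [h3, h4, pow_add]
  push_cast
  field_simp

theorem condMean_erase {f : (V → Fin 2) → ℝ} {E : Finset V} {A : V} (hA : A ∈ E)
    (hf : ∀ v x, f (Function.update v A x) = f v) : condMean f E = condMean f (E.erase A) := by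
  have hinv : Function.Involutive (fun v : V → Fin 2 => Function.update v A (v A + 1)) := by
    intro v
    have : ∀ x : Fin 2, x + 1 + 1 = x := by decide
    simp [this]
  have hfin : ∀ x : Fin 2, x + 1 = 1 ↔ x ≠ 1 := by decide
  -- Flipping the coordinate `A` matches the cells with `v A ≠ 1` to those with `v A = 1`.
  have hflip := Equiv.sum_comp hinv.toPerm
    (fun v : V → Fin 2 => if ∀ w ∈ E, v w = 1 then f v else 0)
  have hcond : ∀ v : V → Fin 2, (∀ w ∈ E, v w = 1) ↔ v A = 1 ∧ ∀ w ∈ E.erase A, v w = 1 := by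
    intro v
    conv_lhs => rw [← Finset.insert_erase hA, Finset.forall_mem_insert]
  have hsum : ∑ v : V → Fin 2, (if ∀ w ∈ E.erase A, v w = 1 then f v else 0) =
      2 * ∑ v : V → Fin 2, (if ∀ w ∈ E, v w = 1 then f v else 0) := by
    rw [two_mul]
    conv_rhs => arg 1; rw [← hflip]
    rw [← Finset.sum_add_distrib]
    refine Finset.sum_congr rfl fun v _ => ?_
    have h1 : (∀ w ∈ E.erase A, Function.update v A (v A + 1) w = 1) ↔
        ∀ w ∈ E.erase A, v w = 1 := by
      refine forall₂_congr fun w hw => ?_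
      rw [Function.update_of_ne (Finset.ne_of_mem_erase hw)]
    simp only [Function.Involutive.coe_toPerm, hcond, hf, Function.update_self, h1, hfin]
    by_cases ha : v A = 1 <;> simp [ha]
  unfold condMean
  rw [hsum, Finset.card_erase_of_mem hA]
  have h1 : 0 < E.card := Finset.card_pos.mpr ⟨A, hA⟩
  have h2 := Finset.card_le_univ E
  have h3 : Fintype.card V - (E.card - 1) = (Fintype.card V - E.card) + 1 := by omega
  rw [h3, pow_succ]
  field_simp

theorem logRatio_update {M N : Finset V} {A : V} (hAM : A ∈ M) (hMN : M ⊆ N)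
    (P : (∀ _ : V, Fin 2) → ℝ) (hP : ∀ v, 0 < P v)
    (hCI : CondIndep (fun _ => Fin 2) P (N \ M) {A} (M \ {A})) (v : V → Fin 2) (x : Fin 2) :
    Real.log (fullMarginal P N (Function.update v A x)) -
        Real.log (fullMarginal P M (Function.update v A x)) =
      Real.log (fullMarginal P N v) - Real.log (fullMarginal P M v) := by
  have hprod : ∀ u : V → Fin 2, fullMarginal P N u * fullMarginal P (M \ {A}) u =
      fullMarginal P (N \ {A}) u * fullMarginal P M u := by
    intro u
    have h : fullMarginal P (N \ M ∪ {A} ∪ M \ {A}) u * fullMarginal P (M \ {A}) u =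
      fullMarginal P (N \ M ∪ M \ {A}) u * fullMarginal P ({A} ∪ M \ {A}) u :=
      hCI (fun w => u w.1)
    have e1 : N \ M ∪ {A} ∪ M \ {A} = N := by grind
    have e2 : N \ M ∪ M \ {A} = N \ {A} := by grind
    have e3 : {A} ∪ M \ {A} = M := by grind
    rwa [e1, e2, e3] at h
  have hlog : ∀ u : V → Fin 2, Real.log (fullMarginal P N u) - Real.log (fullMarginal P M u) =
      Real.log (fullMarginal P (N \ {A}) u) - Real.log (fullMarginal P (M \ {A}) u) := by
    intro u
    have h := congrArg Real.log (hprod u)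
    rw [Real.log_mul (fullMarginal_pos P hP _ _).ne' (fullMarginal_pos P hP _ _).ne',
      Real.log_mul (fullMarginal_pos P hP _ _).ne' (fullMarginal_pos P hP _ _).ne'] at h
    linarith
  rw [hlog, hlog, fullMarginal_update P (by simp), fullMarginal_update P (by simp)]

theorem condMean_sub (f g : (V → Fin 2) → ℝ) (E : Finset V) :
    condMean (fun v => f v - g v) E = condMean f E - condMean g E := by
  unfold condMean
  rw [← mul_sub, ← Finset.sum_sub_distrib]
  congr 1
  refine Finset.sum_congr rfl fun v _ => ?_
  split_ifs <;> simp

/-- (Binary variables.) For `∅ ≠ E ⊆ M ⊊ N ⊆ 𝒱`: if a strictly positive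
distribution satisfies `(N ∖ M) ⫫ {A} | (M ∖ {A})` for some variable `A ∈ E`, then
`λ^N_E(P) = λ^M_E(P)` (non-redundant values, i.e. values at the all-2 cell; `Fin 2` encodes
`{1,2}` with `1 : Fin 2` standing for category 2). -/
theorem mllp_eq_of_condIndep
    {V : Type} [Fintype V] [DecidableEq V]
    (M N E : Finset V) (hE : E.Nonempty) (hEM : E ⊆ M) (hMN : M ⊂ N)
    (P : (∀ _ : V, Fin 2) → ℝ) (hPpos : ∀ v, 0 < P v) (hPsum : ∑ v, P v = 1)
    (A : V) (hA : A ∈ E)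
    (hCI : CondIndep (fun _ => Fin 2) P (N \ M) {A} (M \ {A})) :
    mllp (fun _ => Fin 2) P N E (fun _ => 1) =
      mllp (fun _ => Fin 2) P M E (fun _ => 1) := by
  clear hE
  induction E using Finset.strongInduction with
  | H E ih =>
    have hsum : ∀ F ⊆ M, ∑ G ∈ F.powerset, (mllp (fun _ => Fin 2) P N G (fun _ => 1) -
        mllp (fun _ => Fin 2) P M G (fun _ => 1)) =
        condMean (fun v => Real.log (fullMarginal P N v) - Real.log (fullMarginal P M v)) F := by
      intro F hF
      rw [Finset.sum_sub_distrib, sum_mllp P (hF.trans hMN.1), sum_mllp P hF, condMean_sub]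
    have h1 := hsum E hEM
    rw [condMean_erase hA (logRatio_update (hEM hA) hMN.1 P hPpos hCI),
      ← hsum _ ((Finset.erase_subset A E).trans hEM)] at h1
    -- The subsets of `E` not contained in `E.erase A` are those containing `A`.
    have hsub : (E.erase A).powerset ⊆ E.powerset :=
      Finset.powerset_mono.mpr (Finset.erase_subset A E)
    rw [← Finset.sum_sdiff hsub, add_eq_right, Finset.sum_eq_single E] at h1
    · exact sub_eq_zero.mp h1
    · intro G hG hne
      rw [Finset.mem_sdiff, Finset.mem_powerset, Finset.mem_powerset] at hG
      have hAG : A ∈ G := by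
        by_contra h
        exact hG.2 (Finset.subset_erase.mpr ⟨hG.1, h⟩)
      exact sub_eq_zero.mpr (ih G (hG.1.ssubset_of_ne hne) (hG.1.trans hEM) hAG)
    · intro h
      refine absurd ?_ h
      rw [Finset.mem_sdiff, Finset.mem_powerset, Finset.mem_powerset]
      exact ⟨subset_rfl, fun h => Finset.notMem_erase A E (h hA)⟩
end
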